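/- arXiv:2512.24292 — 9 statements merged into one kernel-verified Lean document; each statement's English description precedes it below -/
import Mathlib

section
/- Let F be a finite field with q elements. There exist elements α, β in F with α ≠ 0, β ≠ 0 and α² + β² = −1 if and only if q ∉ {2, 5}. -/
/-!
For `q = 2` and `q = 5`, Fermat's little theorem forces `α = β = 1`, respectively
`α², β² ∈ {1, -1}`, and no such sum equals `-1`.

Conversely, in characteristic two take any `α ∉ {0, 1}` and `β = α + 1`. In odd characteristic,
`-1` is a sum of two squares; if `-1` is not a square, both summands are automatically nonzero.
If `-1 = i²`, the conic `(α + iβ)(α - iβ) = -1` is parametrised by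
`α + iβ = t`, `α - iβ = -t⁻¹`, and both coordinates are nonzero as soon as `t⁴ ≠ 1`. Such a unit
`t` exists unless `q - 1 ∣ 4`, because the unit group is cyclic of order `q - 1`.
-/

/-- In a finite field `F` with `q` elements, there exist nonzero `α, β` with
`α² + β² = -1` if and only if `q ∉ {2, 5}`. -/
theorem stmt_0 {F : Type*} [Field F] [Fintype F] (q : ℕ)
    (hq : Fintype.card F = q) :
    (∃ α β : F, α ≠ 0 ∧ β ≠ 0 ∧ α ^ 2 + β ^ 2 = -1) ↔ (q ≠ 2 ∧ q ≠ 5) := by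
  constructor
  · rintro ⟨a, b, ha, hb, h⟩
    have hc : (q : F) = 0 := hq ▸ FiniteField.cast_card_eq_zero F
    have h1 := FiniteField.pow_card_sub_one_eq_one a ha
    have h2 := FiniteField.pow_card_sub_one_eq_one b hb
    rw [hq] at h1 h2
    constructor
    · rintro rfl
      norm_num at h1 h2 hc
      subst h1 h2
      exact one_ne_zero (α := F) (by linear_combination h - hc)
    · rintro rfl
      norm_num at h1 h2 hc
      have e1 : (a ^ 2 - 1) * (a ^ 2 + 1) = 0 := by linear_combination h1
      have e2 : (b ^ 2 - 1) * (b ^ 2 + 1) = 0 := by linear_combination h2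
      refine one_ne_zero (α := F) ?_
      rcases mul_eq_zero.1 e1 with e1 | e1 <;> rcases mul_eq_zero.1 e2 with e2 | e2
      · linear_combination 2 * h - 2 * e1 - 2 * e2 - hc
      · linear_combination h - e1 - e2
      · linear_combination h - e1 - e2
      · linear_combination e1 + e2 - h
  · rintro ⟨hq2, hq5⟩
    have hq1 : 1 < q := hq ▸ Fintype.one_lt_card
    by_cases h2 : (2 : F) = 0
    · have hu : ¬ ∀ x : Fˣ, x ^ 1 = 1 := by
        rw [FiniteField.forall_pow_eq_one_iff, hq, Nat.dvd_one]
        omega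
      push Not at hu
      obtain ⟨x, hx⟩ := hu
      rw [pow_one] at hx
      refine ⟨x, x + 1, x.ne_zero, fun h => hx (Units.ext ?_), ?_⟩
      · rw [Units.val_one]
        linear_combination h - h2
      · linear_combination ((x : F) ^ 2 + x + 1) * h2
    · by_cases hs : IsSquare (-1 : F)
      · obtain ⟨i, hi⟩ := hs
        have hi0 : i ≠ 0 := by
          rintro rfl
          simp at hi
        have hq3 : q ≠ 3 := by
          rintro rfl
          have h1 := FiniteField.pow_card_sub_one_eq_one i hi0
          rw [hq] at h1
          exact h2 (by linear_combination -hi - h1)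
        have hu : ¬ ∀ x : Fˣ, x ^ 4 = 1 := by
          rw [FiniteField.forall_pow_eq_one_iff, hq]
          intro hd
          have := Nat.le_of_dvd (by norm_num) hd
          have : q ≤ 5 := by omega
          interval_cases q <;> omega
        push Not at hu
        obtain ⟨x, hx⟩ := hu
        have hx0 : (x : F) ≠ 0 := x.ne_zero
        have hx4 : (x : F) ^ 4 ≠ 1 := fun h => hx (Units.ext (by simpa using h))
        generalize (x : F) = t at hx0 hx4
        refine ⟨(t ^ 2 - 1) / (2 * t), (t ^ 2 + 1) / (2 * t * i), ?_, ?_, ?_⟩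
        · refine div_ne_zero (fun h => hx4 ?_) (mul_ne_zero h2 hx0)
          linear_combination (t ^ 2 + 1) * h
        · refine div_ne_zero (fun h => hx4 ?_) (mul_ne_zero (mul_ne_zero h2 hx0) hi0)
          linear_combination (t ^ 2 - 1) * h
        · have hi' : i ^ 2 = -1 := by rw [hi, sq]
          rw [div_pow, div_pow, mul_pow _ i, hi']
          field_simp
          ring
      · obtain ⟨p, hp, n, hpp, -⟩ := FiniteField.card' F
        have : NeZero p := ⟨hpp.ne_zero⟩
        obtain ⟨a, b, hab⟩ := CharP.sq_add_sq F p (-1)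
        push_cast at hab
        refine ⟨a, b, ?_, ?_, hab⟩
        · intro h
          exact hs ⟨b, by rw [← hab, h]; ring⟩
        · intro h
          exact hs ⟨a, by rw [← hab, h]; ring⟩
end

section
/- For a prime power q, there exists a self-dual linear [4,2,3]_q code if and only if q ∉ {2, 5}. -/
/-!
For nonzero `a`, `b` with `1 + a² + b² = 0`, the rows `(1, 0, a, b)` and `(0, 1, -b, a)` span a
self-dual `[4,2,3]` code: the rows are isotropic and mutually orthogonal, and any two of the four
columns are independent because `a`, `b` and `a² + b² = -1` are all nonzero.

Such `a`, `b` exist unless `q ∈ {2, 5}` (`exists_nonzero_sq_add_sq`). In characteristic two take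
`b = 1 + a` with `a ≠ 0, 1`. In odd characteristic `-1` is a sum of two squares; if one of these
vanishes, then `-1 = i²`, and the conic `(a + ib)(a - ib) = -1` is parametrised by `t = a + ib`, so
that it suffices to choose `t ∉ {0, ±1, ±i}`, which is possible as soon as `q ≠ 5`.

Conversely, a codeword of weight three in a self-orthogonal code gives three nonzero squares with
sum zero. Over `𝔽₂` and `𝔽₅` nonzero squares are `±1`, and a sum of three of these is odd and at
most three in absolute value, hence nonzero (`not_isotropic_weight_three`).
-/

open Finset

/-- The distance `d(v, C)` from a vector `v` to a code `C`. -/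
noncomputable def distTo {n : ℕ} {F : Type*} [DecidableEq F] (C : Set (Fin n → F))
    (v : Fin n → F) : ℕ :=
  sInf (hammingDist v '' C)

/-- `numAt C v t` is the number `B_{v,t}` of codewords of `C` at Hamming
distance `t` from `v`. -/
noncomputable def numAt {n : ℕ} {F : Type*} [DecidableEq F] (C : Set (Fin n → F))
    (v : Fin n → F) (t : ℕ) : ℕ :=
  Set.ncard {c ∈ C | hammingDist v c = t}

/-- A code is completely regular if `B_{v,t}` depends only on `t` and `d(v,C)`. -/
def CompletelyRegular {n : ℕ} {F : Type*} [DecidableEq F]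
    (C : Set (Fin n → F)) : Prop :=
  ∀ u v : Fin n → F, distTo C u = distTo C v → ∀ t, numAt C u t = numAt C v t

/-- The covering radius `ρ` of a code. -/
noncomputable def coveringRadius {n : ℕ} {F : Type*} [DecidableEq F]
    (C : Set (Fin n → F)) : ℕ :=
  sSup (Set.range (distTo C))

/-- `C` is uniformly packed in the wide sense: there are rational packing
coefficients `β_0, …, β_ρ` with `∑ i, β i * B_{x,i} = 1` for every `x`. -/
def UPWS {n : ℕ} {F : Type*} [DecidableEq F] (C : Set (Fin n → F)) : Prop :=
  ∃ β : ℕ → ℚ, ∀ x : Fin n → F,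
    ∑ i ∈ Finset.range (coveringRadius C + 1), β i * (numAt C x i : ℚ) = 1

/-- `C` is a linear `[n, k, d]` code: a `k`-dimensional subspace of `F^n` such
that `d` is the least Hamming weight of a nonzero codeword. -/
def IsLinearCode {n : ℕ} {F : Type*} [Field F] [DecidableEq F]
    (C : Submodule F (Fin n → F)) (k d : ℕ) : Prop :=
  Module.finrank F C = k ∧
  IsLeast {w : ℕ | ∃ c ∈ C, c ≠ 0 ∧ hammingNorm c = w} d

/-- `C` is self-dual: it coincides with its Euclidean dual code. -/
def SelfDual {n : ℕ} {F : Type*} [Field F]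
    (C : Submodule F (Fin n → F)) : Prop :=
  (C : Set (Fin n → F)) = {x | ∀ v ∈ C, ∑ i, x i * v i = 0}

lemma hammingNorm_fin_four {F : Type*} [Field F] [DecidableEq F] (c : Fin 4 → F) :
    hammingNorm c = (if c 0 = 0 then 0 else 1) + (if c 1 = 0 then 0 else 1)
      + (if c 2 = 0 then 0 else 1) + (if c 3 = 0 then 0 else 1) := by
  rw [hammingNorm, Finset.card_filter, Fin.sum_univ_four]
  simp only [ne_eq, ite_not]

lemma exists_nonzero_sq_add_sq {F : Type*} [Field F] [Fintype F] [DecidableEq F]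
    (h2 : Fintype.card F ≠ 2) (h5 : Fintype.card F ≠ 5) :
    ∃ a b : F, a ≠ 0 ∧ b ≠ 0 ∧ 1 + a ^ 2 + b ^ 2 = 0 := by
  by_cases hchar : (2 : F) = 0
  · have : ∃ t : F, t ∉ ({0, 1} : Finset F) := by
      by_contra! h
      have hu : ({0, 1} : Finset F) = Finset.univ := Finset.eq_univ_iff_forall.2 h
      apply h2
      rw [← Finset.card_univ, ← hu]
      simp
    obtain ⟨t, ht⟩ := this
    simp only [Finset.mem_insert, Finset.mem_singleton, not_or] at ht
    refine ⟨t, 1 + t, ht.1, fun h => ht.2 ?_, ?_⟩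
    · linear_combination h - hchar
    · linear_combination (1 + t + t ^ 2) * hchar
  by_cases hi : ∃ i : F, i ^ 2 = -1
  · obtain ⟨i, hi⟩ := hi
    have hi0 : i ≠ 0 := by rintro rfl; simp at hi
    have hne : (1 : F) ≠ -1 := fun h => hchar (by linear_combination h)
    have h1 : (1 : F) ≠ i := by
      rintro rfl; exact hne (by linear_combination hi)
    have h1' : (1 : F) ≠ -i := fun h => hne (by linear_combination hi + (1 - i) * h)
    have h2' : (-1 : F) ≠ i := fun h => h1' (by linear_combination -h)
    have h3' : (-1 : F) ≠ -i := fun h => h1 (by linear_combination -h)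
    have h4' : i ≠ -i := fun h => by
      have : 2 * i = 0 := by linear_combination h
      exact (mul_ne_zero hchar hi0) this
    have : ∃ t : F, t ∉ ({0, 1, -1, i, -i} : Finset F) := by
      by_contra! h
      have hu : ({0, 1, -1, i, -i} : Finset F) = Finset.univ := Finset.eq_univ_iff_forall.2 h
      apply h5
      rw [← Finset.card_univ, ← hu]
      rw [Finset.card_insert_of_notMem, Finset.card_insert_of_notMem,
        Finset.card_insert_of_notMem, Finset.card_insert_of_notMem, Finset.card_singleton]
      all_goals simp [*, hi0.symm]
    obtain ⟨t, ht⟩ := this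
    simp only [Finset.mem_insert, Finset.mem_singleton, not_or] at ht
    obtain ⟨t0, t1, t2, t3, t4⟩ := ht
    -- The solution of `a + i b = t`, `a - i b = -1 / t`.
    refine ⟨(t ^ 2 - 1) / (2 * t), (t ^ 2 + 1) / (2 * i * t), ?_, ?_, ?_⟩
    · refine div_ne_zero ?_ (mul_ne_zero hchar t0)
      have : t ^ 2 - 1 = (t - 1) * (t - (-1)) := by ring
      rw [this]
      exact mul_ne_zero (sub_ne_zero.2 t1) (sub_ne_zero.2 t2)
    · refine div_ne_zero ?_ (mul_ne_zero (mul_ne_zero hchar hi0) t0)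
      have : t ^ 2 + 1 = (t - i) * (t - (-i)) := by linear_combination hi
      rw [this]
      exact mul_ne_zero (sub_ne_zero.2 t3) (sub_ne_zero.2 t4)
    · rw [div_pow, div_pow, mul_pow (2 * i), mul_pow 2 i, hi]
      field_simp
      ring
  · obtain ⟨a, b, hab⟩ := FiniteField.exists_root_sum_quadratic (R := F)
      (f := Polynomial.X ^ 2) (g := Polynomial.X ^ 2 + Polynomial.C 1)
      (Polynomial.degree_X_pow 2) (Polynomial.degree_X_pow_add_C (by norm_num) 1)
      (FiniteField.odd_card_of_char_ne_two fun h => hchar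
        (by have := ringChar.Nat.cast_ringChar (R := F); rw [h] at this; exact_mod_cast this))
    simp only [Polynomial.eval_pow, Polynomial.eval_X, Polynomial.eval_add,
      Polynomial.eval_C] at hab
    refine ⟨a, b, ?_, ?_, by linear_combination hab⟩
    · rintro rfl
      exact hi ⟨b, by linear_combination hab⟩
    · rintro rfl
      exact hi ⟨a, by linear_combination hab⟩

lemma not_isotropic_weight_three {F : Type*} [Field F] [Fintype F] [DecidableEq F]
    (h : Fintype.card F = 2 ∨ Fintype.card F = 5) (c : Fin 4 → F) (hc : hammingNorm c = 3) :
    ∑ i, c i * c i ≠ 0 := by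
  have key : ∀ x y z w : F, (if x = 0 then 0 else 1) + (if y = 0 then 0 else 1)
      + (if z = 0 then 0 else 1) + (if w = 0 then 0 else 1) = 3 →
      x * x + y * y + z * z + w * w ≠ 0 := by
    -- A nonzero square is `1` or `-1`.
    have hsq : ∀ x : F, x = 0 ∨ x * x = 1 ∨ x * x = -1 := by
      intro x
      by_cases hx : x = 0
      · exact Or.inl hx
      right
      have hp := FiniteField.pow_card_sub_one_eq_one x hx
      rcases h with h | h <;> rw [h] at hp
      · left
        simp only [Nat.add_one_sub_one, pow_one] at hp
        simp [hp]
      · have : (x * x - 1) * (x * x + 1) = 0 := by linear_combination hp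
        rcases mul_eq_zero.1 this with h | h
        · left; linear_combination h
        · right; linear_combination h
    have h1 : (1 : F) ≠ 0 := one_ne_zero
    -- `3 ≠ 0`, since the characteristic is `2` or `5`.
    have h3 : (3 : F) ≠ 0 := by
      intro h3
      have hq : (Fintype.card F : F) = 0 := Nat.cast_card_eq_zero F
      rcases h with h | h <;> rw [h] at hq <;> push_cast at hq
      · exact h1 (by linear_combination h3 - hq)
      · exact h1 (by linear_combination 2 * h3 - hq)
    intro x y z w hw hs
    rcases hsq x with hx | hx | hx <;> rcases hsq y with hy | hy | hy <;>
    rcases hsq z with hz | hz | hz <;> rcases hsq w with hw' | hw' | hw' <;>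
    grind
  rw [hammingNorm_fin_four] at hc
  rw [Fin.sum_univ_four]
  exact key _ _ _ _ hc

/-- The encoder `F² → F⁴` with generator matrix rows `(1, 0, a, b)` and `(0, 1, -b, a)`. -/
def encoder {F : Type*} [Field F] (a b : F) : (Fin 2 → F) →ₗ[F] (Fin 4 → F) where
  toFun x := ![x 0, x 1, a * x 0 - b * x 1, b * x 0 + a * x 1]
  map_add' x y := by
    ext i; fin_cases i <;> simp <;> ring
  map_smul' r x := by
    ext i; fin_cases i <;> simp <;> ring

lemma encoder_apply {F : Type*} [Field F] (a b : F) (x : Fin 2 → F) :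
    encoder a b x = ![x 0, x 1, a * x 0 - b * x 1, b * x 0 + a * x 1] := rfl

lemma encoder_isLinearCode {F : Type*} [Field F] [DecidableEq F] {a b : F} (ha : a ≠ 0)
    (hb : b ≠ 0) (h : 1 + a ^ 2 + b ^ 2 = 0) :
    IsLinearCode (LinearMap.range (encoder a b)) 2 3 := by
  refine ⟨?_, ?_, ?_⟩
  · rw [LinearMap.finrank_range_of_inj]
    · simp
    · intro x y hxy
      have h0 := congrFun hxy 0
      have h1 := congrFun hxy 1
      simp only [encoder_apply] at h0 h1
      ext i
      fin_cases i
      · simpa using h0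
      · simpa using h1
  · refine ⟨encoder a b ![1, 0], ⟨_, rfl⟩, ?_, ?_⟩
    · intro h0
      have := congrFun h0 0
      simp [encoder_apply] at this
    · rw [hammingNorm_fin_four]
      simp [encoder_apply, ha, hb]
  · rintro w ⟨c, ⟨x, rfl⟩, hc, rfl⟩
    rw [hammingNorm_fin_four]
    have hx : ¬ (x 0 = 0 ∧ x 1 = 0) := by
      rintro ⟨h0, h1⟩
      apply hc
      ext i; fin_cases i <;> simp [encoder_apply, h0, h1]
    have e1 : x 0 = 0 → x 1 ≠ 0 → a * x 0 - b * x 1 ≠ 0 ∧ b * x 0 + a * x 1 ≠ 0 := by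
      intro hs ht
      simp [ha, hb, hs, ht]
    have e2 : x 1 = 0 → x 0 ≠ 0 → a * x 0 - b * x 1 ≠ 0 ∧ b * x 0 + a * x 1 ≠ 0 := by
      intro ht hs
      simp [ha, hb, hs, ht]
    -- The last two coordinates determine the message: their matrix has determinant `-1`.
    have e3 : a * x 0 - b * x 1 = 0 → b * x 0 + a * x 1 = 0 → x 0 = 0 := fun h1 h2 => by
      linear_combination x 0 * h - a * h1 - b * h2
    have c0 : encoder a b x 0 = x 0 := rfl
    have c1 : encoder a b x 1 = x 1 := rfl
    have c2 : encoder a b x 2 = a * x 0 - b * x 1 := rfl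
    have c3 : encoder a b x 3 = b * x 0 + a * x 1 := rfl
    rw [← c0, ← c1] at hx
    rw [← c2, ← c3, ← c0, ← c1] at e1 e2
    rw [← c2, ← c3, ← c0] at e3
    clear hc c0 c1 c2 c3
    generalize encoder a b x = c at *
    split_ifs <;> first | omega | (exfalso; tauto)

lemma encoder_selfDual {F : Type*} [Field F] {a b : F} (h : 1 + a ^ 2 + b ^ 2 = 0) :
    SelfDual (LinearMap.range (encoder a b)) := by
  ext z
  simp only [SetLike.mem_coe, Set.mem_ofPred_eq, LinearMap.mem_range]
  constructor
  · rintro ⟨x, rfl⟩ v ⟨y, rfl⟩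
    simp only [Fin.sum_univ_four, encoder_apply, Matrix.cons_val]
    linear_combination (x 0 * y 0 + x 1 * y 1) * h
  · intro hz
    have h0 := hz _ ⟨![1, 0], rfl⟩
    have h1 := hz _ ⟨![0, 1], rfl⟩
    simp [Fin.sum_univ_four, encoder_apply] at h0 h1
    refine ⟨![z 0, z 1], ?_⟩
    ext i
    fin_cases i
    · simp [encoder_apply]
    · simp [encoder_apply]
    · simp [encoder_apply]
      linear_combination a * h0 - b * h1 - z 2 * h
    · simp [encoder_apply]
      linear_combination b * h0 + a * h1 - z 3 * h

/-- Over the field with `q` elements, a self-dual linear `[4,2,3]_q` code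
exists if and only if `q ∉ {2, 5}`. -/
theorem stmt_1 {F : Type*} [Field F] [Fintype F] [DecidableEq F] (q : ℕ)
    (hq : Fintype.card F = q) :
    (∃ C : Submodule F (Fin 4 → F), IsLinearCode C 2 3 ∧ SelfDual C) ↔
      (q ≠ 2 ∧ q ≠ 5) := by
  subst hq
  constructor
  · rintro ⟨C, ⟨_, ⟨c, hcC, _, hw⟩, _⟩, hsd⟩
    have hc : c ∈ (C : Set (Fin 4 → F)) := hcC
    rw [hsd] at hc
    exact ⟨fun h => not_isotropic_weight_three (Or.inl h) c hw (hc c hcC),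
      fun h => not_isotropic_weight_three (Or.inr h) c hw (hc c hcC)⟩
  · rintro ⟨h2, h5⟩
    obtain ⟨a, b, ha, hb, hab⟩ := exists_nonzero_sq_add_sq h2 h5
    exact ⟨_, encoder_isLinearCode ha hb hab, encoder_selfDual hab⟩
end

section
/- Let q ≥ 2 be a prime power and let C be a linear [n,k,d]_q code with k ≥ 2, and assume the Griesmer bound n ≥ Σ_{i=0}^{k−1} ⌈d/q^i⌉ holds for C. Then C is MDS if and only if C is a Griesmer code and d ≤ q. -/
/-!
The `i`-th Griesmer term is `⌈d / q ^ i⌉`, written `(d + q ^ i - 1) / q ^ i`. Since `d ≥ 1`, the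
term at `i = 0` is `d` and each of the other `k - 1` terms is at least `1`, so the Griesmer sum is
at least `d + k - 1`. If `n = d + k - 1`, the Griesmer bound forces equality and hence
`⌈d / q⌉ = 1`, that is `d ≤ q`. Conversely, if `d ≤ q`, then all terms with `i ≥ 1` equal `1` and
the Griesmer sum is exactly `d + k - 1`.
-/

open Finset

lemma one_le_griesmerTerm {d q : ℕ} (hd : 1 ≤ d) (hq : 1 ≤ q) (i : ℕ) :
    1 ≤ (d + q ^ i - 1) / q ^ i := by
  have hp : 0 < q ^ i := Nat.pow_pos hq
  rw [Nat.one_le_div_iff hp]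
  omega

lemma griesmerTerm_eq_one {d q i : ℕ} (hd : 1 ≤ d) (hdq : d ≤ q) (hi : i ≠ 0) :
    (d + q ^ i - 1) / q ^ i = 1 := by
  have hp : q ≤ q ^ i := Nat.le_self_pow hi q
  refine Nat.div_eq_of_lt_le ?_ ?_ <;> omega

/-- For a linear `[n,k,d]_q` code with `k ≥ 2` satisfying the Griesmer bound,
the code is MDS iff it is a Griesmer code and `d ≤ q`. -/
theorem stmt_2 {F : Type*} [Field F] [Fintype F] [DecidableEq F]
    {n k d q : ℕ} (hq : Fintype.card F = q)
    (C : Submodule F (Fin n → F)) (hC : IsLinearCode C k d) (hk : 2 ≤ k)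
    (hG : n ≥ ∑ i ∈ Finset.range k, (d + q ^ i - 1) / q ^ i) :
    d + k = n + 1 ↔
      (n = ∑ i ∈ Finset.range k, (d + q ^ i - 1) / q ^ i ∧ d ≤ q) := by
  have hq1 : 1 ≤ q := hq ▸ Fintype.card_pos
  have hd : 1 ≤ d := by
    obtain ⟨c, -, hc0, rfl⟩ := hC.2.1
    exact hammingNorm_pos_iff.mpr hc0
  obtain ⟨m, rfl⟩ := Nat.exists_eq_add_of_le' hk
  -- Separate the terms at `i = 0` and `i = 1` from the remaining `m` terms.
  rw [Finset.sum_range_succ', Finset.sum_range_succ'] at hG ⊢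
  simp only [zero_add, pow_zero, pow_one, Nat.div_one, Nat.add_sub_cancel] at hG ⊢
  constructor
  · intro h
    have hrest : m ≤ ∑ i ∈ Finset.range m, (d + q ^ (i + 1 + 1) - 1) / q ^ (i + 1 + 1) := by
      simpa using Finset.card_nsmul_le_sum (Finset.range m) _ 1
        fun i _ => one_le_griesmerTerm hd hq1 (i + 1 + 1)
    have hfirst : 1 ≤ (d + q - 1) / q := by
      simpa using one_le_griesmerTerm hd hq1 1
    refine ⟨by omega, ?_⟩
    have hlt : (d + q - 1) / q < 2 := by omega
    rw [Nat.div_lt_iff_lt_mul hq1] at hlt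
    omega
  · rintro ⟨hn, hdq⟩
    have hrest : ∑ i ∈ Finset.range m, (d + q ^ (i + 1 + 1) - 1) / q ^ (i + 1 + 1) = m := by
      rw [Finset.sum_congr rfl fun i _ => griesmerTerm_eq_one hd hdq (Nat.succ_ne_zero (i + 1))]
      simp
    have hfirst : (d + q - 1) / q = 1 := by
      simpa using griesmerTerm_eq_one hd hdq one_ne_zero
    omega
end

section
/- Let q > 2 be a prime power and n > 2, and let C = {α·(1,...,1) : α ∈ F_q} ⊆ F_q^n be the q-ary repetition code of length n. Then C is uniformly packed in the wide sense if and only if q ≥ n. -/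
/-!
For a vector `x`, let `m_α` be the number of coordinates of `x` equal to `α`; the distance from `x`
to the codeword `α·(1,…,1)` is `n - m_α`. Setting `f m = β (n - m)`, with `β` extended by zero
beyond the covering radius, the packing condition reads `∑ α, f m_α = 1` for all `x`
(`sum_numAt_eq`).

If `n ≤ q`, a vector with distinct coordinates shows that the covering radius is at least `n - 1`,
so every `α` with `m_α > 0` is counted, and `f m = m / n` works because the `m_α` add up to `n`.

If `n > q`, every vector repeats a coordinate, so the covering radius is at most `n - 2` and
`f 0 = f 1 = 0`. Since `q ≥ 3`, every splitting `n = a + b + c` is realised by a vector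
(`sum_three_values`), whence `f a + f b + f c = 1`. Comparing `(a, 1, n - a - 1)` with
`(a + 1, 0, n - a - 1)` gives `f (a + 1) = f a`, so `f n = 0`, while `(n, 0, 0)` gives `f n = 1`.
-/

open Finset

/-- The number of coordinates of `x` that are equal to `α`. -/
def mult {n : ℕ} {F : Type*} [DecidableEq F] (x : Fin n → F) (α : F) : ℕ :=
  #{i | x i = α}

lemma mult_le {n : ℕ} {F : Type*} [DecidableEq F] (x : Fin n → F) (α : F) :
    mult x α ≤ n := by
  simpa [mult] using Finset.card_filter_le (univ : Finset (Fin n)) (fun i => x i = α)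

lemma hammingDist_const {n : ℕ} {F : Type*} [DecidableEq F] (x : Fin n → F) (α : F) :
    hammingDist x (fun _ => α) = n - mult x α := by
  have h := Finset.card_filter_add_card_filter_not (s := (univ : Finset (Fin n)))
    (fun i => x i = α)
  rw [Finset.card_univ, Fintype.card_fin] at h
  unfold hammingDist mult
  simp only [ne_eq]
  omega

lemma sum_mult {n : ℕ} {F : Type*} [Fintype F] [DecidableEq F] (x : Fin n → F) :
    ∑ α, mult x α = n := by
  have h := Finset.card_eq_sum_card_fiberwise (s := (univ : Finset (Fin n)))
    (t := (univ : Finset F)) (f := x) (by simp)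
  simpa [mult] using h.symm

lemma numAt_repetition {n : ℕ} {F : Type*} [Fintype F] [DecidableEq F] (hn : 0 < n)
    (x : Fin n → F) (t : ℕ) :
    numAt (Set.range (fun α : F => (fun _ => α : Fin n → F))) x t
      = #{α : F | n - mult x α = t} := by
  have hinj : Function.Injective (fun α : F => (fun _ => α : Fin n → F)) :=
    fun a b h => congrFun h ⟨0, hn⟩
  rw [← Set.ncard_coe_finset, ← Set.ncard_image_of_injective _ hinj, numAt]
  congr 1
  ext c
  simp only [Set.mem_ofPred_eq, Set.mem_range, Set.mem_image, coe_filter, mem_univ, true_and]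
  constructor
  · rintro ⟨⟨α, rfl⟩, h⟩
    exact ⟨α, by rw [← hammingDist_const, h], rfl⟩
  · rintro ⟨α, h, rfl⟩
    exact ⟨⟨α, rfl⟩, by rw [hammingDist_const, h]⟩

/-- The packing sum, regrouped as a sum over the codewords; those at distance `≥ R` from `x`
contribute zero. -/
lemma sum_numAt_eq {n : ℕ} {F : Type*} [Fintype F] [DecidableEq F] (hn : 0 < n)
    (x : Fin n → F) (β : ℕ → ℚ) (R : ℕ) :
    ∑ i ∈ range R,
        β i * (numAt (Set.range (fun α : F => (fun _ => α : Fin n → F))) x i : ℚ)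
      = ∑ α : F, if n - mult x α < R then β (n - mult x α) else 0 := by
  have h : ∀ i, β i * (numAt (Set.range (fun α : F => (fun _ => α : Fin n → F))) x i : ℚ)
      = ∑ α : F, if n - mult x α = i then β i else 0 := by
    intro i
    rw [numAt_repetition hn, ← Finset.sum_filter, Finset.sum_const, nsmul_eq_mul, mul_comm]
  simp_rw [h]
  rw [Finset.sum_comm]
  refine Finset.sum_congr rfl fun α _ => ?_
  rw [Finset.sum_ite_eq]
  simp

lemma distTo_le {n : ℕ} {F : Type*} [DecidableEq F] (x : Fin n → F) (α : F) :
    distTo (Set.range (fun α : F => (fun _ => α : Fin n → F))) x ≤ n - mult x α :=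
  Nat.sInf_le ⟨_, ⟨α, rfl⟩, hammingDist_const x α⟩

/-- An injective word is at distance at least `n - 1` from every constant word. -/
lemma le_coveringRadius {n : ℕ} {F : Type*} [Fintype F] [Nonempty F] [DecidableEq F]
    (h : n ≤ Fintype.card F) :
    n - 1 ≤ coveringRadius (Set.range (fun α : F => (fun _ => α : Fin n → F))) := by
  obtain ⟨x⟩ : Nonempty (Fin n ↪ F) :=
    Function.Embedding.nonempty_of_card_le (by simpa using h)
  have hx : n - 1 ≤ distTo (Set.range (fun α : F => (fun _ => α : Fin n → F))) x := by
    refine le_csInf ((Set.range_nonempty _).image _) ?_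
    rintro _ ⟨_, ⟨α, rfl⟩, rfl⟩
    rw [hammingDist_const]
    have : mult (x : Fin n → F) α ≤ 1 := by
      refine Finset.card_le_one.2 fun i hi j hj => x.injective ?_
      simp only [mem_filter, mem_univ, true_and] at hi hj
      rw [hi, hj]
    omega
  refine hx.trans (le_csSup ⟨n, ?_⟩ ⟨_, rfl⟩)
  rintro _ ⟨y, rfl⟩
  exact (distTo_le y (Classical.arbitrary F)).trans (Nat.sub_le _ _)

/-- By pigeonhole, a word longer than the alphabet agrees with some constant word in at least two
coordinates. -/
lemma coveringRadius_le {n : ℕ} {F : Type*} [Fintype F] [Nonempty F] [DecidableEq F]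
    (h : Fintype.card F < n) :
    coveringRadius (Set.range (fun α : F => (fun _ => α : Fin n → F))) ≤ n - 2 := by
  refine csSup_le (Set.range_nonempty _) ?_
  rintro _ ⟨x, rfl⟩
  obtain ⟨i, j, hij, hx⟩ := Fintype.exists_ne_map_eq_of_card_lt x (by simpa using h)
  refine (distTo_le x (x i)).trans ?_
  have : 1 < mult x (x i) :=
    Finset.one_lt_card.2 ⟨i, by simp, j, by simp [hx], hij⟩
  omega

lemma card_fin_filter {n a b : ℕ} (hb : b ≤ n) : #{i : Fin n | a ≤ i.1 ∧ i.1 < b} = b - a := by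
  rw [← Nat.card_Ico a b, ← Finset.card_map Fin.valEmbedding]
  congr 1
  ext k
  simp only [mem_map, mem_filter, mem_univ, true_and, Fin.valEmbedding_apply, mem_Ico]
  constructor
  · rintro ⟨i, hi, rfl⟩
    exact hi
  · intro hk
    exact ⟨⟨k, by omega⟩, hk, rfl⟩

/-- If the packing identity holds for all words and `f 0 = 0`, then evaluating it at a word with
`a` letters `u`, `b` letters `v` and `n - (a + b)` letters `w` gives a three-term identity. -/
lemma sum_three_values {n : ℕ} {F : Type*} [Fintype F] [DecidableEq F] {u v w : F}
    (huv : u ≠ v) (huw : u ≠ w) (hvw : v ≠ w) (f : ℕ → ℚ) (f0 : f 0 = 0)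
    (hf : ∀ x : Fin n → F, ∑ α, f (mult x α) = 1) {a b : ℕ} (hab : a + b ≤ n) :
    f a + f b + f (n - (a + b)) = 1 := by
  set x : Fin n → F := fun i => if i.1 < a then u else if i.1 < a + b then v else w with hx
  have hu : mult x u = a := by
    rw [mult, ← Nat.sub_zero a, ← card_fin_filter (n := n) (a := 0) (b := a) (by omega)]
    congr 1
    ext i
    simp only [hx, mem_filter, mem_univ, true_and]
    split_ifs with h1 h2
    · exact ⟨fun _ => by omega, fun _ => rfl⟩
    · exact ⟨fun h => absurd h.symm huv, fun h => by omega⟩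
    · exact ⟨fun h => absurd h.symm huw, fun h => by omega⟩
  have hv : mult x v = b := by
    have h := card_fin_filter (n := n) (a := a) (b := a + b) hab
    rw [Nat.add_sub_cancel_left] at h
    rw [mult, ← h]
    congr 1
    ext i
    simp only [hx, mem_filter, mem_univ, true_and]
    split_ifs with h1 h2
    · exact ⟨fun h => absurd h huv, fun h => by omega⟩
    · exact ⟨fun _ => by omega, fun _ => rfl⟩
    · exact ⟨fun h => absurd h.symm hvw, fun h => by omega⟩
  have hw : mult x w = n - (a + b) := by
    rw [mult, ← card_fin_filter (n := n) (a := a + b) (b := n) le_rfl]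
    congr 1
    ext i
    have := i.2
    simp only [hx, mem_filter, mem_univ, true_and]
    split_ifs with h1 h2
    · exact ⟨fun h => absurd h huw, fun h => by omega⟩
    · exact ⟨fun h => absurd h hvw, fun h => by omega⟩
    · exact ⟨fun _ => by omega, fun _ => rfl⟩
  have ho : ∀ α, α ∉ ({u, v, w} : Finset F) → mult x α = 0 := by
    intro α hα
    simp only [mem_insert, mem_singleton, not_or] at hα
    rw [mult, Finset.card_eq_zero, Finset.filter_eq_empty_iff]
    intro i _
    simp only [hx]
    split_ifs
    exacts [Ne.symm hα.1, Ne.symm hα.2.1, Ne.symm hα.2.2]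
  have h := hf x
  rw [← Finset.sum_subset (Finset.subset_univ {u, v, w})
    (fun α _ hα => by rw [ho α hα, f0]), Finset.sum_insert (by simp [huv, huw]),
    Finset.sum_insert (by simp [hvw]), Finset.sum_singleton, hu, hv, hw] at h
  linarith

/-- For `q > 2` and `n > 2`, the `q`-ary repetition code of length `n` is
uniformly packed in the wide sense iff `q ≥ n`. -/
theorem stmt_7 {F : Type*} [Field F] [Fintype F] [DecidableEq F] (q n : ℕ)
    (hq : Fintype.card F = q) (hq2 : 2 < q) (hn : 2 < n) :
    UPWS (Set.range (fun α : F => (fun _ => α : Fin n → F))) ↔ n ≤ q := by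
  subst hq
  constructor
  · rintro ⟨β, hβ⟩
    by_contra! hlt
    have hR := coveringRadius_le hlt
    set R := coveringRadius (Set.range (fun α : F => (fun _ => α : Fin n → F)))
    obtain ⟨u, v, w, huv, huw, hvw⟩ := Fintype.two_lt_card_iff.1 hq2
    let f : ℕ → ℚ := fun m => if n - m < R + 1 then β (n - m) else 0
    have f0 : f 0 = 0 := if_neg (by omega)
    have f1 : f 1 = 0 := if_neg (by omega)
    have hf : ∀ x : Fin n → F, ∑ α, f (mult x α) = 1 := fun x => by
      rw [← hβ x, sum_numAt_eq (by omega)]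
    have key : ∀ {a b : ℕ}, a + b ≤ n → f a + f b + f (n - (a + b)) = 1 :=
      fun hab => sum_three_values huv huw hvw f f0 hf hab
    have hz : ∀ a, a ≤ n → f a = 0 := by
      intro a
      induction a with
      | zero => exact fun _ => f0
      | succ a ih =>
        intro ha
        have h1 := key (a := a) (b := 1) ha
        have h2 := key (a := a + 1) (b := 0) ha
        have h3 := ih (by omega)
        simp only [Nat.add_zero] at h2
        linarith
    have h := key (a := n) (b := 0) (by omega)
    simp [hz n le_rfl, f0] at h
  · intro h
    have hR := le_coveringRadius h
    refine ⟨fun i => ((n : ℚ) - i) / n, fun x => ?_⟩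
    rw [sum_numAt_eq (by omega)]
    have hn0 : (n : ℚ) ≠ 0 := by
      have : n ≠ 0 := by omega
      exact_mod_cast this
    have hs : ∀ α : F, (if n - mult x α <
        coveringRadius (Set.range (fun α : F => (fun _ => α : Fin n → F))) + 1
        then ((n : ℚ) - ((n - mult x α : ℕ) : ℚ)) / n else 0) = (mult x α : ℚ) / n := by
      intro α
      have hle := mult_le x α
      split_ifs with hc
      · rw [Nat.cast_sub hle]
        ring
      · have : mult x α = 0 := by omega
        simp [this]
    rw [Finset.sum_congr rfl fun α _ => hs α, ← Finset.sum_div, ← Nat.cast_sum, sum_mult,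
      div_self hn0]
end

section
/- Let m > 1 be odd and q = 2^m. Then no linear [q+2, 3, q]_q code is uniformly packed in the wide sense (and hence none is completely regular). -/
/-!
Let `q = 2 ^ m` and `n = q + 2`. A nonzero codeword has at most two zeros, so any three coordinate
functionals on the three-dimensional code `C` are independent.

*The covering radius is at most `q - 2`* (`exists_agree_four`). If a word `x` agreed with every
codeword in at most three places, the `q + 2` coordinate functionals on `C ⊕ F x`, together with
the coefficient of `x`, would be `q + 3` functionals on a four-dimensional space with no four of
them vanishing at a nonzero vector. In such an arc a vector killed by two functionals is killed by
exactly three (`arc_three`). Restricted to the kernel of a functional `X` on no secant, which exists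
by counting, the triples of functionals with a common zero thus form a Steiner triple system on
`q + 3` points, so `3` divides `(q + 3) (q + 2)`. This fails because `q ≡ 2 mod 3` for odd `m`
(`no_arc`).

*Every set of at least four coordinates is the support of a dual word* (`dual_support`).

*Fourier analysis.* Packing coefficients `β` give a radial function `z ↦ β (wt z)` supported on
vectors with at least four zeros, whose translates by `C` sum to `1`. Its Fourier coefficients at
nonzero dual words vanish (`fourier_dual`), hence they vanish at some word of each weight
`4, …, n`. Written in the basis `(number of zeros).choose k`, this is a triangular system whose only
solution is `β = 0` (`radial_eq_zero`), contradicting the sum `1`.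

A completely regular code is uniformly packed in the wide sense (`CompletelyRegular.upws`), which
gives the second claim.
-/

open Finset

/-! ### Arcs in dimension four -/

lemma card_ne_zero_mem {F W : Type*} [Field F] [Fintype F] [AddCommGroup W] [Module F W]
    [Fintype W] [DecidableEq W] (S : Submodule F W) [DecidablePred (· ∈ S)] :
    #{w : W | w ≠ 0 ∧ w ∈ S} = Fintype.card F ^ Module.finrank F S - 1 := by
  have h1 : #{w : W | w ∈ S} = Fintype.card F ^ Module.finrank F S := by
    rw [← Module.card_eq_pow_finrank (K := F) (V := S), Fintype.card_subtype]
  have h2 : ({w : W | w ≠ 0 ∧ w ∈ S} : Finset W) = ({w : W | w ∈ S} : Finset W).erase 0 := by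
    ext w; simp
  rw [h2, card_erase_of_mem (by simp), h1]

lemma finrank_inf_ker {F W : Type*} [Field F] [AddCommGroup W] [Module F W]
    [FiniteDimensional F W] (K : Submodule F W) (Y : W →ₗ[F] F)
    (hY : ¬ K ≤ LinearMap.ker Y) :
    Module.finrank F ↥(K ⊓ LinearMap.ker Y) + 1 = Module.finrank F K := by
  have hne : (Y.domRestrict K : Module.Dual F K) ≠ 0 := by
    intro h
    apply hY
    intro w hw
    exact LinearMap.congr_fun h ⟨w, hw⟩
  rw [← Module.Dual.finrank_ker_add_one_of_ne_zero hne]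
  have h2 : K ⊓ LinearMap.ker Y
      = Submodule.map K.subtype (LinearMap.ker (Y.domRestrict K)) := by
    ext w
    simp [and_comm]
  rw [h2]
  congr 1
  exact (Submodule.equivSubtypeMap K (LinearMap.ker (Y.domRestrict K))).finrank_eq.symm

/-- Here and below an arc is a family of functionals on a four-dimensional space such that no
nonzero vector is killed by more than three of them. Any two have a two-dimensional common kernel, and no
third functional of the arc vanishes on it. -/
lemma arc_pair {F W ι : Type*} [Field F] [DecidableEq F] [AddCommGroup W] [Module F W]
    [FiniteDimensional F W] (hW : Module.finrank F W = 4) [Fintype ι] [DecidableEq ι]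
    (hι : 4 ≤ Fintype.card ι) (φ : ι → W →ₗ[F] F)
    (h : ∀ w ≠ 0, #{i | φ i w = 0} ≤ 3) {i j : ι} (hij : i ≠ j) :
    Module.finrank F ↥(LinearMap.ker (φ i) ⊓ LinearMap.ker (φ j)) = 2 ∧
    ∀ k, k ≠ i → k ≠ j →
      ¬ LinearMap.ker (φ i) ⊓ LinearMap.ker (φ j) ≤ LinearMap.ker (φ k) := by
  -- four distinct functionals of the arc have no common nonzero zero
  have key : ∀ k l, k ≠ i → k ≠ j → l ≠ i → l ≠ j → k ≠ l → ∀ w, φ i w = 0 → φ j w = 0 →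
      φ k w = 0 → φ l w = 0 → w = 0 := by
    intro k l hki hkj hli hlj hkl w h1 h2 h3 h4
    by_contra hw
    have := h w hw
    have hsub : ({i, j, k, l} : Finset ι) ⊆ ({i | φ i w = 0} : Finset ι) := by
      intro x hx
      simp only [mem_insert, mem_singleton] at hx
      rcases hx with rfl | rfl | rfl | rfl <;> simpa
    have hc := card_le_card hsub
    rw [card_insert_of_notMem (by simp [hij, hki.symm, hli.symm]),
      card_insert_of_notMem (by simp [hkj.symm, hlj.symm]), card_pair hkl] at hc
    omega
  have other : ∀ k, ∃ l, l ≠ i ∧ l ≠ j ∧ l ≠ k := by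
    intro k
    have : ∃ l, l ∉ ({i, j, k} : Finset ι) := by
      by_contra! hall
      have h1 : #(univ : Finset ι) ≤ #({i, j, k} : Finset ι) := card_le_card fun x _ => hall x
      have h2 := card_le_three (a := i) (b := j) (c := k)
      rw [card_univ] at h1
      omega
    obtain ⟨l, hl⟩ := this
    simp only [mem_insert, mem_singleton, not_or] at hl
    exact ⟨l, hl⟩
  set K := LinearMap.ker (φ i) ⊓ LinearMap.ker (φ j) with hK
  have hlow : ∀ Y : W →ₗ[F] F, ∀ S : Submodule F W,
      Module.finrank F S ≤ Module.finrank F ↥(S ⊓ LinearMap.ker Y) + 1 := by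
    intro Y S
    by_cases hY : S ≤ LinearMap.ker Y
    · rw [inf_eq_left.mpr hY]; omega
    · exact (finrank_inf_ker S Y hY).ge
  have hge : 2 ≤ Module.finrank F K := by
    have h1 := hlow (φ i) ⊤
    have h2 := hlow (φ j) (LinearMap.ker (φ i))
    rw [top_inf_eq, finrank_top, hW] at h1
    rw [← hK] at h2
    omega
  have mem : ∀ w : W, w ∈ K ↔ φ i w = 0 ∧ φ j w = 0 := by intro w; simp [hK]
  have hnot : ∀ k, k ≠ i → k ≠ j → ¬ K ≤ LinearMap.ker (φ k) := by
    intro k hki hkj hle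
    obtain ⟨l, hli, hlj, hlk⟩ := other k
    have hinj : Function.Injective ((φ l).domRestrict K) := by
      rw [injective_iff_map_eq_zero]
      rintro ⟨w, hw⟩ h0
      have := key k l hki hkj hli hlj hlk.symm w ((mem w).1 hw).1 ((mem w).1 hw).2 (hle hw) h0
      simpa using this
    have := LinearMap.finrank_le_finrank_of_injective hinj
    rw [Module.finrank_self] at this
    omega
  refine ⟨le_antisymm ?_ hge, hnot⟩
  obtain ⟨k, hki, hkj, -⟩ := other i
  obtain ⟨l, hli, hlj, hlk⟩ := other k
  have h1 := finrank_inf_ker K (φ k) (hnot k hki hkj)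
  have hinj : Function.Injective ((φ l).domRestrict (K ⊓ LinearMap.ker (φ k))) := by
    rw [injective_iff_map_eq_zero]
    rintro ⟨w, hw⟩ h0
    have := key k l hki hkj hli hlj hlk.symm w ((mem w).1 hw.1).1 ((mem w).1 hw.1).2 hw.2 h0
    simpa using this
  have := LinearMap.finrank_le_finrank_of_injective hinj
  rw [Module.finrank_self] at this
  omega

/-- In an arc of the maximal size `q + 3`, every nonzero vector killed by two of the functionals
is killed by exactly three of them: the `q + 1` remaining functionals cut out `q + 1` distinct
lines of the two-dimensional common kernel, which is all the lines it has. -/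
lemma arc_three {F W ι : Type*} [Field F] [Fintype F] [DecidableEq F] [AddCommGroup W]
    [Module F W] [Fintype W] [DecidableEq W] (hW : Module.finrank F W = 4) [Fintype ι]
    [DecidableEq ι] (hι : Fintype.card ι = Fintype.card F + 3) (φ : ι → W →ₗ[F] F)
    (h : ∀ w ≠ 0, #{i | φ i w = 0} ≤ 3) {i j : ι} (hij : i ≠ j) (w : W) (hw : w ≠ 0)
    (hi : φ i w = 0) (hj : φ j w = 0) : #{k | φ k w = 0} = 3 := by
  classical
  have hq : 1 < Fintype.card F := Fintype.one_lt_card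
  obtain ⟨h2, hnot⟩ := arc_pair hW (by omega) φ h hij
  set K := LinearMap.ker (φ i) ⊓ LinearMap.ker (φ j) with hK
  have mem : ∀ w : W, w ∈ K ↔ φ i w = 0 ∧ φ j w = 0 := by intro w; simp [hK]
  set E : Finset W := {w : W | w ≠ 0 ∧ w ∈ K} with hE
  set R : Finset ι := (univ.erase i).erase j with hR
  have hRc : #R = Fintype.card F + 1 := by
    rw [hR, card_erase_of_mem (by simp [hij.symm]), card_erase_of_mem (by simp), card_univ, hι]
    rfl
  have hEc : #E = Fintype.card F ^ 2 - 1 := by rw [hE, card_ne_zero_mem, h2]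
  have hdc := sum_card_bipartiteAbove_eq_sum_card_bipartiteBelow
    (fun (v : W) (k : ι) => φ k v = 0) (s := E) (t := R)
  have hbelow : ∀ k ∈ R, #(bipartiteBelow (fun (v : W) (k : ι) => φ k v = 0) E k)
      = Fintype.card F - 1 := by
    intro k hk
    simp only [hR, mem_erase, mem_univ, and_true] at hk
    have h3 := finrank_inf_ker K (φ k) (hnot k hk.2 hk.1)
    have h4 := card_ne_zero_mem (K ⊓ LinearMap.ker (φ k))
    rw [show Module.finrank F ↥(K ⊓ LinearMap.ker (φ k)) = 1 by omega, pow_one] at h4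
    rw [← h4]
    congr 1
    ext v
    simp [bipartiteBelow, hE, and_assoc]
  rw [sum_congr rfl hbelow, sum_const, hRc, smul_eq_mul] at hdc
  have habove : ∀ v ∈ E, #(bipartiteAbove (fun (v : W) (k : ι) => φ k v = 0) R v) + 2
      = #{k | φ k v = 0} := by
    intro v hv
    simp only [hE, mem_filter, mem_univ, true_and, mem] at hv
    have : bipartiteAbove (fun (v : W) (k : ι) => φ k v = 0) R v
        = (({k | φ k v = 0} : Finset ι).erase i).erase j := by
      ext k
      simp only [bipartiteAbove, hR, mem_filter, mem_erase, mem_univ, true_and, and_true]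
      tauto
    have hjm : j ∈ (({k | φ k v = 0} : Finset ι).erase i) := by simp [hij.symm, hv.2.2]
    have him : i ∈ ({k | φ k v = 0} : Finset ι) := by simp [hv.2.1]
    have e1 := card_erase_add_one hjm
    have e2 := card_erase_add_one him
    rw [this]
    omega
  have hle : ∀ v ∈ E, #(bipartiteAbove (fun (v : W) (k : ι) => φ k v = 0) R v) ≤ 1 := by
    intro v hv
    have e1 := habove v hv
    have e2 := h v (by simp only [hE, mem_filter] at hv; exact hv.2.1)
    omega
  have hwE : w ∈ E := by simp [hE, hw, mem, hi, hj]
  by_contra hcon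
  have e1 := habove w hwE
  have e2 := h w hw
  have hlt : #(bipartiteAbove (fun (v : W) (k : ι) => φ k v = 0) R w) < 1 := by omega
  have hs := sum_lt_sum hle ⟨w, hwE, hlt⟩
  rw [hdc, sum_const, hEc, smul_eq_mul, mul_one] at hs
  have : (Fintype.card F + 1) * (Fintype.card F - 1) = Fintype.card F ^ 2 - 1 := by
    obtain ⟨r, hr⟩ : ∃ r, Fintype.card F = r + 1 := ⟨_, (Nat.sub_add_cancel hq.le).symm⟩
    rw [hr]; simp; ring_nf; omega
  omega

/-- For `q ≥ 7` some functional `X` lies on no secant, that is, in no span of two members of the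
family: the secants cover at most `(q + 3).choose 2 * q ^ 2 < q ^ 4` functionals. Membership in the
span of `φ i` and `φ j` is expressed through kernels. -/
lemma exists_off_secants {F W ι : Type*} [Field F] [Fintype F] [AddCommGroup W]
    [Module F W] [FiniteDimensional F W] (hW : Module.finrank F W = 4) [Fintype ι]
    [DecidableEq ι] (hι : Fintype.card ι = Fintype.card F + 3) (hq : 7 ≤ Fintype.card F)
    (φ : ι → W →ₗ[F] F) :
    ∃ X : Module.Dual F W, ∀ i j, i ≠ j → ¬ LinearMap.ker (φ i) ⊓ LinearMap.ker (φ j)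
      ≤ LinearMap.ker X := by
  classical
  have : Finite (Module.Dual F W) := Module.finite_of_finite F
  have := Fintype.ofFinite (Module.Dual F W)
  let G : Finset ι → Finset (Module.Dual F W) :=
    fun s => {X | X ∈ Submodule.span F (↑(s.image φ) : Set (Module.Dual F W))}
  have hG : ∀ s ∈ powersetCard 2 (univ : Finset ι), #(G s) ≤ Fintype.card F ^ 2 := by
    intro s hs
    have h1 : #(G s) = Fintype.card F ^ Module.finrank F
        (Submodule.span F (↑(s.image φ) : Set (Module.Dual F W))) := by
      rw [← Module.card_eq_pow_finrank (K := F) (V := Submodule.span F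
        (↑(s.image φ) : Set (Module.Dual F W))), Fintype.card_subtype]
    rw [h1]
    apply Nat.pow_le_pow_right (by omega)
    refine (finrank_span_finset_le_card (R := F) (s.image φ)).trans ?_
    exact card_image_le.trans (mem_powersetCard.1 hs).2.le
  have hc := card_biUnion_le_card_mul _ G _ hG
  rw [card_powersetCard, card_univ, hι] at hc
  have hdual : Fintype.card (Module.Dual F W) = Fintype.card F ^ 4 := by
    rw [Module.card_eq_pow_finrank (K := F), Subspace.dual_finrank_eq, hW]
  have hlt : (Fintype.card F + 3).choose 2 * Fintype.card F ^ 2 < Fintype.card F ^ 4 := by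
    generalize Fintype.card F = q at *
    have h2 : (q + 3).choose 2 < q ^ 2 := by
      rw [Nat.choose_two_right, Nat.div_lt_iff_lt_mul (by norm_num)]
      simp only [Nat.add_succ_sub_one]
      nlinarith
    calc _ < q ^ 2 * q ^ 2 := Nat.mul_lt_mul_of_pos_right h2 (by positivity)
      _ = q ^ 4 := by ring
  obtain ⟨X, hX⟩ : ∃ X, X ∉ (powersetCard 2 univ).biUnion G := by
    by_contra! hall
    have h1 : #(univ : Finset (Module.Dual F W)) ≤ _ := card_le_card fun x _ => hall x
    rw [card_univ, hdual] at h1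
    omega
  refine ⟨X, fun i j hij hle => hX ?_⟩
  rw [mem_biUnion]
  refine ⟨{i, j}, by simp [mem_powersetCard, hij], ?_⟩
  have h3 : X ∈ Submodule.span F (Set.range ![φ i, φ j]) := by
    apply mem_span_of_iInf_ker_le_ker
    refine le_trans ?_ hle
    refine le_inf (iInf_le_of_le 0 (by simp)) (iInf_le_of_le 1 (by simp))
  simp only [G, mem_filter, mem_univ, true_and]
  convert h3 using 2
  simp [Set.pair_comm]

/-- There is no arc of size `q + 3` in dimension four when `q ≥ 7` and `q ≡ 2 mod 3`. For `X` on no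
secant, count pairs `(w, (i, j))` with `i ≠ j` and `w ≠ 0` killed by `X`, `φ i`, `φ j`. There are
`(q + 3) (q + 2) (q - 1)` of them, which is `2 mod 3`, but each `w` lies in `0` or `3 * 2` pairs. -/
theorem no_arc {F W ι : Type*} [Field F] [Fintype F] [DecidableEq F] [AddCommGroup W]
    [Module F W] [FiniteDimensional F W] (hW : Module.finrank F W = 4) [Fintype ι]
    (hι : Fintype.card ι = Fintype.card F + 3) (hq : 7 ≤ Fintype.card F)
    (h3 : Fintype.card F % 3 = 2) (φ : ι → W →ₗ[F] F)
    (h : ∀ w ≠ 0, #{i | φ i w = 0} ≤ 3) : False := by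
  classical
  have : Finite W := Module.finite_of_finite F
  have := Fintype.ofFinite W
  obtain ⟨X, hX⟩ := exists_off_secants hW hι hq φ
  set D : Finset W := {w : W | w ≠ 0 ∧ X w = 0} with hD
  have hdc := sum_card_bipartiteAbove_eq_sum_card_bipartiteBelow
    (fun (v : W) (p : ι × ι) => φ p.1 v = 0 ∧ φ p.2 v = 0) (s := D) (t := (univ : Finset ι).offDiag)
  have hbelow : ∀ p ∈ (univ : Finset ι).offDiag,
      #(bipartiteBelow (fun (v : W) (p : ι × ι) => φ p.1 v = 0 ∧ φ p.2 v = 0) D p)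
      = Fintype.card F - 1 := by
    intro p hp
    simp only [mem_offDiag, mem_univ, true_and] at hp
    have e1 := (arc_pair hW (by omega) φ h hp).1
    have e2 := finrank_inf_ker _ X (hX _ _ hp)
    rw [e1] at e2
    have e3 := card_ne_zero_mem (LinearMap.ker (φ p.1) ⊓ LinearMap.ker (φ p.2) ⊓ LinearMap.ker X)
    rw [Nat.succ.inj e2, pow_one] at e3
    rw [← e3]
    congr 1
    ext v
    simp [bipartiteBelow, hD]
    tauto
  rw [sum_congr rfl hbelow, sum_const, offDiag_card, card_univ, hι, smul_eq_mul] at hdc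
  have habove : ∀ v ∈ D, 3 ∣
      #(bipartiteAbove (fun (v : W) (p : ι × ι) => φ p.1 v = 0 ∧ φ p.2 v = 0)
        (univ : Finset ι).offDiag v) := by
    intro v hv
    simp only [hD, mem_filter, mem_univ, true_and] at hv
    have e1 : bipartiteAbove (fun (v : W) (p : ι × ι) => φ p.1 v = 0 ∧ φ p.2 v = 0)
        (univ : Finset ι).offDiag v = ({i | φ i v = 0} : Finset ι).offDiag := by
      ext p
      simp [bipartiteAbove]
      tauto
    rw [e1]
    rcases (({i | φ i v = 0} : Finset ι).offDiag).eq_empty_or_nonempty with h0 | ⟨p, hp⟩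
    · simp [h0]
    · simp only [mem_offDiag, mem_filter, mem_univ, true_and] at hp
      rw [offDiag_card, arc_three hW hι φ h hp.2.2 v hv.1 hp.1 hp.2.1]
      norm_num
  have hdvd := dvd_sum habove
  rw [hdc] at hdvd
  obtain ⟨r, hr⟩ : ∃ r, Fintype.card F = 3 * r + 2 := ⟨Fintype.card F / 3, by omega⟩
  rw [hr, ← Nat.mul_sub_one] at hdvd
  have e : (3 * r + 2 + 3) * (3 * r + 2 + 3 - 1) * (3 * r + 2 - 1)
      = 3 * (9 * r ^ 3 + 30 * r ^ 2 + 29 * r + 6) + 2 := by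
    have e1 : 3 * r + 2 + 3 - 1 = 3 * r + 4 := by omega
    have e2 : 3 * r + 2 - 1 = 3 * r + 1 := by omega
    rw [e1, e2]; ring
  rw [e] at hdvd
  omega

/-! ### Fourier coefficients of radial functions -/

/-- Newton expansion of a sequence in the binomial basis; the coefficients are iterated forward
differences at `0`, so they start no earlier than the sequence does. -/
lemma newton_expansion (γ : ℕ → ℂ) (n : ℕ) (h : ∀ j < 4, γ j = 0) :
    ∃ g : ℕ → ℂ, (∀ k < 4, g k = 0) ∧
      ∀ j ≤ n, γ j = ∑ k ∈ range (n + 1), g k * (j.choose k : ℂ) := by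
  refine ⟨fun k => (fwdDiff 1)^[k] γ 0, ?_, ?_⟩
  · intro k hk
    simp only [fwdDiff_iter_eq_sum_shift]
    refine sum_eq_zero fun j hj => ?_
    rw [mem_range] at hj
    simp [h j (by omega)]
  · intro j hj
    have h1 := shift_eq_sum_fwdDiff_iter (1 : ℕ) γ j 0
    simp only [zero_add, smul_eq_mul, mul_one, nsmul_eq_mul] at h1
    rw [h1]
    rw [← sum_subset (range_subset_range.2 (show j + 1 ≤ n + 1 by omega))]
    · exact sum_congr rfl fun k _ => mul_comm _ _
    · intro k _ hk
      rw [mem_range, not_lt] at hk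
      rw [Nat.choose_eq_zero_of_lt (by omega)]; simp

/-- A character sum over a coordinate subspace vanishes if the character is nontrivial on it. -/
lemma sum_char_coord {F : Type*} [Field F] [Fintype F] [DecidableEq F] {n : ℕ}
    (ψ : AddChar F ℂ) {a : F} (ha : ψ a ≠ 1) (K : Finset (Fin n)) (y : Fin n → F) {i : Fin n}
    (hi : i ∉ K) (hy : y i ≠ 0) :
    ∑ z : Fin n → F with ∀ l ∈ K, z l = 0, ψ (y ⬝ᵥ z) = 0 := by
  -- a vector of the subspace with `y ⬝ᵥ e = a`; translating by it multiplies the sum by `ψ a`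
  set e : Fin n → F := Pi.single i ((y i)⁻¹ * a) with he
  have hye : y ⬝ᵥ e = a := by
    rw [he, dotProduct_single, mul_inv_cancel_left₀ hy]
  have hK : ∀ l ∈ K, e l = 0 := by
    intro l hl
    have : l ≠ i := by rintro rfl; exact hi hl
    simp [he, this]
  set S := ∑ z : Fin n → F with ∀ l ∈ K, z l = 0, ψ (y ⬝ᵥ z) with hS
  have hshift : S = S * ψ a := by
    rw [hS, sum_mul]
    refine sum_nbij' (fun z => z - e) (fun z => z + e) ?_ ?_ ?_ ?_ ?_
    · intro z hz
      simp only [mem_filter, mem_univ, true_and] at hz ⊢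
      intro l hl; simp [hz l hl, hK l hl]
    · intro z hz
      simp only [mem_filter, mem_univ, true_and] at hz ⊢
      intro l hl; simp [hz l hl, hK l hl]
    · intro z _; simp
    · intro z _; simp
    · intro z _
      rw [← AddChar.map_add_eq_mul]
      congr 1
      rw [dotProduct_sub, hye]; ring
  have : S * (ψ a - 1) = 0 := by linear_combination -hshift
  rcases mul_eq_zero.1 this with h | h
  · exact h
  · exact absurd (sub_eq_zero.1 h) ha

/-- The Fourier coefficient of `z ↦ (Z z).choose k`, with `Z z` the number of zeros of `z`, is the
sum over all `k`-sets `K` of coordinates of the character sum over the vectors vanishing on `K`. -/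
lemma sum_choose_char {F : Type*} [Field F] [Fintype F] [DecidableEq F] {n : ℕ}
    (ψ : AddChar F ℂ) (y : Fin n → F) (k : ℕ) :
    ∑ z : Fin n → F, ((#{i | z i = 0}).choose k : ℂ) * ψ (y ⬝ᵥ z)
      = ∑ K ∈ powersetCard k (univ : Finset (Fin n)),
          ∑ z : Fin n → F with ∀ l ∈ K, z l = 0, ψ (y ⬝ᵥ z) := by
  simp_rw [sum_filter]
  rw [sum_comm]
  refine sum_congr rfl fun z _ => ?_
  rw [← sum_filter, sum_const, nsmul_eq_mul]
  congr 2
  rw [← card_powersetCard]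
  congr 1
  ext K
  simp only [mem_powersetCard, mem_filter, subset_univ, true_and]
  constructor
  · rintro ⟨h1, h2⟩
    exact ⟨h2, fun l hl => by simpa using h1 hl⟩
  · rintro ⟨h1, h2⟩
    exact ⟨fun l hl => by simpa using h2 l hl, h1⟩

/-- If a radial function supported on vectors with at least four zeros has vanishing Fourier
coefficients at some `y` of each weight `4, …, n`, it is zero. In the binomial basis the `t`-th
basis function has zero Fourier coefficient at words of weight more than `t` and a positive one at
words of weight `t`, so the system is triangular. -/
lemma radial_eq_zero {F : Type*} [Field F] [Fintype F] [DecidableEq F] {n : ℕ}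
    (ψ : AddChar F ℂ) {a : F} (ha : ψ a ≠ 1) (γ : ℕ → ℂ) (h4 : ∀ j < 4, γ j = 0)
    (hy : ∀ k, 4 ≤ k → k ≤ n → ∃ y : Fin n → F, #{i | y i ≠ 0} = k ∧
      ∑ z : Fin n → F, γ #{i | z i = 0} * ψ (y ⬝ᵥ z) = 0) :
    ∀ j ≤ n, γ j = 0 := by
  obtain ⟨g, hg4, hg⟩ := newton_expansion γ n h4
  suffices hall : ∀ d k, k + d = n → g k = 0 by
    intro j hj
    rw [hg j hj]
    refine sum_eq_zero fun k hk => ?_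
    rw [mem_range] at hk
    rw [hall (n - k) k (by omega), zero_mul]
  -- downwards from `k = n`: at a word of weight `k` only the basis functions `t ≥ k` contribute,
  -- and `t = k` contributes through the support of the word alone
  intro d
  induction d using Nat.strong_induction_on with
  | _ d ih =>
  intro k hk
  by_cases hk4 : k < 4
  · exact hg4 k hk4
  obtain ⟨y, hyk, hsum⟩ := hy k (by omega) (by omega)
  have e1 : ∑ z : Fin n → F, γ #{i | z i = 0} * ψ (y ⬝ᵥ z)
      = ∑ t ∈ range (n + 1), g t * ∑ K ∈ powersetCard t (univ : Finset (Fin n)),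
          ∑ z : Fin n → F with ∀ l ∈ K, z l = 0, ψ (y ⬝ᵥ z) := by
    simp_rw [← sum_choose_char, mul_sum]
    rw [sum_comm]
    refine sum_congr rfl fun z _ => ?_
    have hz : #{i | z i = 0} ≤ n := by
      simpa using card_le_univ ({i | z i = 0} : Finset (Fin n))
    rw [hg _ hz, sum_mul]
    exact sum_congr rfl fun t _ => by ring
  have hzero : ∀ K : Finset (Fin n), ¬ ({i | y i ≠ 0} : Finset (Fin n)) ⊆ K →
      ∑ z : Fin n → F with ∀ l ∈ K, z l = 0, ψ (y ⬝ᵥ z) = 0 := by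
    intro K hK
    obtain ⟨i, hi, hiK⟩ := not_subset.1 hK
    exact sum_char_coord ψ ha K y hiK (by simpa using hi)
  rw [e1, sum_eq_single k, sum_eq_single ({i | y i ≠ 0} : Finset (Fin n))] at hsum
  · rcases mul_eq_zero.1 hsum with h | h
    · exact h
    · exfalso
      have e2 : ∀ z ∈ ({z | ∀ l ∈ ({i | y i ≠ 0} : Finset (Fin n)), z l = 0} :
          Finset (Fin n → F)), ψ (y ⬝ᵥ z) = 1 := by
        intro z hz
        simp only [mem_filter, mem_univ, true_and] at hz
        have : y ⬝ᵥ z = 0 := sum_eq_zero fun i _ => by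
          by_cases hi : y i = 0
          · simp [hi]
          · simp [hz i hi]
        rw [this, AddChar.map_zero_eq_one]
      rw [sum_congr rfl e2, sum_const, nsmul_eq_mul, mul_one, Nat.cast_eq_zero,
        card_eq_zero] at h
      have : (0 : Fin n → F) ∈ (∅ : Finset (Fin n → F)) := by
        rw [← h]; simp
      simp at this
  · intro K hK hne
    apply hzero
    intro hsub
    exact hne (eq_of_subset_of_card_le hsub (by rw [hyk, (mem_powersetCard.1 hK).2])).symm
  · intro hnot
    exact absurd (mem_powersetCard.2 ⟨subset_univ _, hyk⟩) hnot
  · intro t ht htk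
    rw [mem_range] at ht
    rcases lt_or_gt_of_ne htk with hlt | hgt
    · rw [sum_eq_zero, mul_zero]
      intro K hK
      apply hzero
      intro hsub
      have := card_le_card hsub
      rw [hyk, (mem_powersetCard.1 hK).2] at this
      omega
    · rw [ih (n - t) (by omega) t (by omega), zero_mul]
  · intro hnot
    exact absurd (mem_range.2 (by omega)) hnot

/-- The packing identity forces the Fourier coefficients of the radial weight to vanish at nonzero
dual words. -/
lemma fourier_dual {F : Type*} [Field F] [Fintype F] [DecidableEq F] {n : ℕ}
    (C : Submodule F (Fin n → F)) [Fintype C] (ψ : AddChar F ℂ) {a : F} (ha : ψ a ≠ 1)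
    (γ : ℕ → ℂ) (H : ∀ x : Fin n → F, ∑ c : C, γ #{i | x i = c.1 i} = 1)
    (y : Fin n → F) (hC : ∀ c ∈ C, y ⬝ᵥ c = 0) (hy : y ≠ 0) :
    ∑ z : Fin n → F, γ #{i | z i = 0} * ψ (y ⬝ᵥ z) = 0 := by
  obtain ⟨i, hi⟩ := Function.ne_iff.1 hy
  have e0 : ∑ x : Fin n → F, ψ (y ⬝ᵥ x) = 0 := by
    have := sum_char_coord ψ ha ∅ y (i := i) (by simp) hi
    simpa using this
  have e1 : ∑ x : Fin n → F, (∑ c : C, γ #{i | x i = c.1 i}) * ψ (y ⬝ᵥ x) = 0 := by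
    simp_rw [H, one_mul]; exact e0
  simp_rw [sum_mul] at e1
  rw [sum_comm] at e1
  have e2 : ∀ c : C, ∑ x : Fin n → F, γ #{i | x i = c.1 i} * ψ (y ⬝ᵥ x)
      = ∑ z : Fin n → F, γ #{i | z i = 0} * ψ (y ⬝ᵥ z) := by
    intro c
    refine Fintype.sum_equiv (Equiv.subRight c.1) _ _ fun x => ?_
    simp [sub_eq_zero, dotProduct_sub, hC c.1 c.2]
  rw [sum_congr rfl fun c _ => e2 c, sum_const, nsmul_eq_mul] at e1
  rcases mul_eq_zero.1 e1 with h | h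
  · simp at h
  · exact h

/-! ### Dual words and the covering radius -/

/-- A code of dimension exceeding `#P` has a nonzero codeword vanishing on `P`. -/
lemma exists_vanishing {F : Type*} [Field F] {n : ℕ} (C : Submodule F (Fin n → F))
    (P : Finset (Fin n)) (hP : #P < Module.finrank F C) :
    ∃ c ∈ C, c ≠ 0 ∧ ∀ i ∈ P, c i = 0 := by
  let f : C →ₗ[F] (P → F) := LinearMap.pi fun i => (LinearMap.proj i.1).domRestrict C
  have hker : LinearMap.ker f ≠ ⊥ := LinearMap.ker_ne_bot_of_finrank_lt (by simpa using hP)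
  obtain ⟨c, hc, hne⟩ := Submodule.exists_mem_ne_zero_of_ne_bot hker
  refine ⟨c.1, c.2, by simpa using hne, fun i hi => ?_⟩
  exact congr_fun (LinearMap.mem_ker.1 hc) ⟨i, hi⟩

/-- Every set of four coordinates is the support of a dual word: four coordinate functionals on a
three-dimensional code are dependent, while any three of them are independent. -/
lemma dual_support_four {F : Type*} [Field F] [DecidableEq F] {n : ℕ}
    (C : Submodule F (Fin n → F)) (hdim : Module.finrank F C = 3)
    (hz : ∀ c ∈ C, c ≠ 0 → #{i | c i = 0} ≤ 2) (T : Finset (Fin n)) (hT : #T = 4) :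
    ∃ y : Fin n → F, (∀ c ∈ C, y ⬝ᵥ c = 0) ∧ ∀ i, y i ≠ 0 ↔ i ∈ T := by
  let f : (T → F) →ₗ[F] Module.Dual F C :=
    Fintype.linearCombination F fun i : T => (LinearMap.proj i.1).domRestrict C
  have hker : LinearMap.ker f ≠ ⊥ := LinearMap.ker_ne_bot_of_finrank_lt (by
    rw [Subspace.dual_finrank_eq, hdim]; simp [hT])
  obtain ⟨a, ha, hne⟩ := Submodule.exists_mem_ne_zero_of_ne_bot hker
  let y : Fin n → F := fun i => if h : i ∈ T then a ⟨i, h⟩ else 0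
  have hyT : ∀ i, i ∉ T → y i = 0 := fun i hi => by simp [y, hi]
  have hdot : ∀ c ∈ C, y ⬝ᵥ c = 0 := by
    intro c hc
    have h1 := LinearMap.congr_fun (LinearMap.mem_ker.1 ha) ⟨c, hc⟩
    simp only [f, Fintype.linearCombination_apply, LinearMap.sum_apply, LinearMap.smul_apply,
      LinearMap.zero_apply] at h1
    rw [← h1, dotProduct, ← sum_subset (subset_univ T) (fun i _ hi => by simp [hyT i hi]),
      ← sum_coe_sort T]
    refine sum_congr rfl fun i _ => ?_
    simp [y]
  refine ⟨y, hdot, fun i => ⟨fun h => by_contra fun hi => h (hyT i hi), fun hi h0 => ?_⟩⟩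
  obtain ⟨j, hj⟩ := Function.ne_iff.1 hne
  have hyj : y j.1 ≠ 0 := by simpa [y] using hj
  have hji : j.1 ≠ i := by rintro h; rw [h] at hyj; exact hyj h0
  have hjm : j.1 ∈ T.erase i := mem_erase.2 ⟨hji, j.2⟩
  have hcard : #((T.erase i).erase j.1) = 2 := by
    rw [card_erase_of_mem hjm, card_erase_of_mem hi, hT]
  obtain ⟨c, hc, hc0, hcP⟩ := exists_vanishing C ((T.erase i).erase j.1) (by omega)
  have hcj : c j.1 = 0 := by
    have h1 := hdot c hc
    rw [dotProduct, sum_eq_single j.1] at h1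
    · exact (mul_eq_zero.1 h1).resolve_left hyj
    · intro l _ hlj
      by_cases hlT : l ∈ T
      · by_cases hli : l = i
        · rw [hli, h0, zero_mul]
        · rw [hcP l (by simp [hlj, hli, hlT]), mul_zero]
      · rw [hyT l hlT, zero_mul]
    · simp
  have hsub : T.erase i ⊆ ({l | c l = 0} : Finset (Fin n)) := by
    intro l hl
    by_cases hlj : l = j.1
    · simp [hlj, hcj]
    · simp [hcP l (mem_erase.2 ⟨hlj, hl⟩)]
  have h3 := card_le_card hsub
  have h4 := hz c hc hc0
  rw [card_erase_of_mem hi, hT] at h3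
  omega

/-- Every set of at least four coordinates is the support of a dual word. A dual word supported on
all but one point of the set is combined with one whose support is the missing point and three of
the others; at most four scalars are bad. -/
lemma dual_support {F : Type*} [Field F] [Fintype F] [DecidableEq F] {n : ℕ}
    (hq : 5 ≤ Fintype.card F) (C : Submodule F (Fin n → F)) (hdim : Module.finrank F C = 3)
    (hz : ∀ c ∈ C, c ≠ 0 → #{i | c i = 0} ≤ 2) (k : ℕ) (hk : 4 ≤ k) :
    ∀ T : Finset (Fin n), #T = k →
      ∃ y : Fin n → F, (∀ c ∈ C, y ⬝ᵥ c = 0) ∧ ∀ i, y i ≠ 0 ↔ i ∈ T := by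
  induction k, hk using Nat.le_induction with
  | base => exact dual_support_four C hdim hz
  | succ k hk ih =>
    intro T hT
    obtain ⟨i, hi⟩ : T.Nonempty := card_pos.1 (by omega)
    have hT0 : #(T.erase i) = k := by rw [card_erase_of_mem hi, hT]; rfl
    obtain ⟨y, hyC, hy⟩ := ih _ hT0
    obtain ⟨S, hS, hSc⟩ := exists_subset_card_eq (show 3 ≤ #(T.erase i) by omega)
    have hiS : i ∉ S := fun h => by simpa using hS h
    obtain ⟨u, huC, hu⟩ := dual_support_four C hdim hz (insert i S)
      (by rw [card_insert_of_notMem hiS, hSc])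
    obtain ⟨t, ht⟩ : ∃ t, t ∉ insert 0 (S.image fun j => - y j / u j) := by
      by_contra! hall
      have h1 : #(univ : Finset F) ≤ _ := card_le_card fun x _ => hall x
      have h2 := card_insert_le 0 (S.image fun j => - y j / u j)
      have h3 := card_image_le (s := S) (f := fun j => - y j / u j)
      rw [card_univ] at h1
      omega
    simp only [mem_insert, mem_image, not_or, not_exists, not_and] at ht
    refine ⟨y + t • u, fun c hc => by simp [add_dotProduct, hyC c hc, huC c hc], fun j => ?_⟩
    simp only [Pi.add_apply, Pi.smul_apply, smul_eq_mul]
    by_cases hju : j ∈ insert i S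
    · have huj := (hu j).2 hju
      have hjT : j ∈ T := by
        rcases mem_insert.1 hju with rfl | h
        · exact hi
        · exact mem_of_mem_erase (hS h)
      simp only [hjT, iff_true]
      rcases mem_insert.1 hju with rfl | h
      · have : y j = 0 := by
          by_contra h; simpa using (hy j).1 h
        rw [this, zero_add]
        exact mul_ne_zero ht.1 huj
      · intro h0
        refine ht.2 j h ?_
        rw [div_eq_iff huj]
        linear_combination -h0
    · have huj : u j = 0 := by_contra fun h => hju ((hu j).1 h)
      have hji : j ≠ i := by rintro rfl; exact hju (mem_insert_self _ _)
      rw [huj, mul_zero, add_zero, hy j]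
      simp [hji]

/-- Every word agrees with some codeword in at least four places; otherwise adjoining the word to
the code would give an arc of size `q + 3` in dimension four. -/
lemma exists_agree_four {F : Type*} [Field F] [Fintype F] [DecidableEq F] {n : ℕ}
    (hn : n = Fintype.card F + 2) (hq : 7 ≤ Fintype.card F) (h3 : Fintype.card F % 3 = 2)
    (C : Submodule F (Fin n → F)) (hdim : Module.finrank F C = 3)
    (hz : ∀ c ∈ C, c ≠ 0 → #{i | c i = 0} ≤ 2) (x : Fin n → F) :
    ∃ c ∈ C, 4 ≤ #{i | x i = c i} := by
  by_contra! hcon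
  -- Index the code extended by `x` as `C × F`. The functional at `none` is the coefficient of `x`;
  -- at `some i` it is the `i`-th coordinate of `c + t x`.
  let φ : Option (Fin n) → (C × F) →ₗ[F] F := fun o =>
    o.elim (LinearMap.snd F C F) fun i =>
      (LinearMap.proj i ∘ₗ C.subtype) ∘ₗ LinearMap.fst F C F + x i • LinearMap.snd F C F
  refine no_arc (F := F) (W := C × F) (ι := Option (Fin n)) (by simp [hdim]) (by simp [hn])
    hq h3 φ ?_
  rintro ⟨⟨c, hc⟩, t⟩ hw
  -- For `t = 0` the zeros are those of the codeword `c` together with `none`; for `t ≠ 0` they are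
  -- the agreements of `x` with the codeword `-t⁻¹ c`.
  by_cases ht : t = 0
  · subst ht
    have hc0 : c ≠ 0 := by rintro rfl; exact hw rfl
    have hsub : ({o | φ o (⟨c, hc⟩, 0) = 0} : Finset (Option (Fin n)))
        ⊆ insert none (({i | c i = 0} : Finset (Fin n)).image some) := by
      intro o ho
      cases o with
      | none => simp
      | some i => simpa [φ] using ho
    have h1 := card_le_card hsub
    have h2 := card_insert_le none (({i | c i = 0} : Finset (Fin n)).image some)
    have h4 := card_image_le (s := ({i | c i = 0} : Finset (Fin n))) (f := some)
    have h5 := hz c hc hc0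
    omega
  · have hsub : ({o | φ o (⟨c, hc⟩, t) = 0} : Finset (Option (Fin n)))
        ⊆ ({i | x i = ((-t⁻¹) • c) i} : Finset (Fin n)).image some := by
      intro o ho
      cases o with
      | none => simp [φ] at ho; exact absurd ho ht
      | some i =>
        simp only [φ, mem_filter, mem_univ, true_and] at ho
        simp only [mem_image, mem_filter, mem_univ, true_and]
        refine ⟨i, ?_, rfl⟩
        have ho' : c i + x i * t = 0 := ho
        simp only [Pi.smul_apply, smul_eq_mul]
        field_simp
        linear_combination ho'
    have h1 := card_le_card hsub
    have h4 := card_image_le (s := ({i | x i = ((-t⁻¹) • c) i} : Finset (Fin n))) (f := some)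
    have h5 := hcon _ (C.smul_mem (-t⁻¹) hc)
    omega

/-! ### Packing coefficients -/

lemma distTo_le_s8 {n : ℕ} {F : Type*} [DecidableEq F] {C : Set (Fin n → F)} (v : Fin n → F)
    {c : Fin n → F} (hc : c ∈ C) : distTo C v ≤ hammingDist v c :=
  Nat.sInf_le ⟨c, hc, rfl⟩

lemma exists_distTo {n : ℕ} {F : Type*} [DecidableEq F] {C : Set (Fin n → F)} (hC : C.Nonempty)
    (v : Fin n → F) : ∃ c ∈ C, hammingDist v c = distTo C v :=
  Nat.sInf_mem (hC.image _)

lemma distTo_le_coveringRadius {n : ℕ} {F : Type*} [DecidableEq F] {C : Set (Fin n → F)}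
    (hC : C.Nonempty) (v : Fin n → F) : distTo C v ≤ coveringRadius C := by
  refine le_csSup ⟨n, ?_⟩ ⟨v, rfl⟩
  rintro _ ⟨u, rfl⟩
  obtain ⟨c, -, hc⟩ := exists_distTo hC u
  rw [← hc]
  simpa using hammingDist_le_card_fintype (x := u) (y := c)

/-- A completely regular code is uniformly packed: the packing coefficients solve a triangular
system, from the largest distance downwards. -/
lemma CompletelyRegular.upws {n : ℕ} {F : Type*} [Finite F] [DecidableEq F]
    {C : Set (Fin n → F)} (hC : C.Nonempty) (h : CompletelyRegular C) : UPWS C := by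
  set r := coveringRadius C with hr
  suffices hall : ∀ d ≤ r + 1, ∃ β : ℕ → ℚ, ∀ x : Fin n → F, r + 1 - d ≤ distTo C x →
      ∑ i ∈ range (r + 1), β i * (numAt C x i : ℚ) = 1 by
    obtain ⟨β, hβ⟩ := hall (r + 1) le_rfl
    exact ⟨β, fun x => hβ x (by omega)⟩
  intro d
  induction d with
  | zero =>
    intro _
    refine ⟨0, fun x hx => ?_⟩
    have := distTo_le_coveringRadius hC x
    omega
  | succ d ih =>
    intro hd
    obtain ⟨β, hβ⟩ := ih (by omega)
    set l := r + 1 - (d + 1) with hl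
    have hlm : l ∈ range (r + 1) := mem_range.2 (by omega)
    by_cases hx0 : ∃ x0, distTo C x0 = l
    · obtain ⟨x0, hx0⟩ := hx0
      have hpos : (numAt C x0 l : ℚ) ≠ 0 := by
        obtain ⟨c, hc, hcd⟩ := exists_distTo hC x0
        rw [Nat.cast_ne_zero, numAt]
        have hne : {c ∈ C | hammingDist x0 c = l}.Nonempty := ⟨c, hc, by rw [hcd, hx0]⟩
        exact ((Set.ncard_pos (Set.toFinite _)).2 hne).ne'
      let b := (1 - ∑ i ∈ (range (r + 1)).erase l, β i * (numAt C x0 i : ℚ)) / numAt C x0 l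
      refine ⟨Function.update β l b, fun x hx => ?_⟩
      have hrest : ∑ i ∈ (range (r + 1)).erase l, Function.update β l b i * (numAt C x i : ℚ)
          = ∑ i ∈ (range (r + 1)).erase l, β i * (numAt C x i : ℚ) :=
        sum_congr rfl fun i hi => by rw [Function.update_of_ne (ne_of_mem_erase hi)]
      rw [← add_sum_erase _ _ hlm, hrest, Function.update_self]
      rcases hx.eq_or_lt with heq | hlt
      · have hnum : ∀ t, numAt C x t = numAt C x0 t := h x x0 (by rw [hx0, ← heq])
        simp only [hnum, b]
        field_simp
        ring
      · have hz : numAt C x l = 0 := by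
          rw [numAt, Set.ncard_eq_zero]
          ext c
          simp only [Set.mem_ofPred_eq, Set.mem_empty_iff_false, iff_false, not_and]
          intro hc hcl
          have := distTo_le_s8 x hc
          omega
        have h1 := hβ x (by omega)
        rw [← add_sum_erase _ _ hlm] at h1
        simpa [hz] using h1
    · refine ⟨β, fun x hx => hβ x ?_⟩
      have : distTo C x ≠ l := fun h => hx0 ⟨x, h⟩
      omega

lemma agree_add_dist {n : ℕ} {F : Type*} [DecidableEq F] (x c : Fin n → F) :
    #{i | x i = c i} + hammingDist x c = n := by
  have := card_filter_add_card_filter_not (s := (univ : Finset (Fin n))) (fun i => x i = c i)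
  simpa [hammingDist] using this

/-- The packing sum over distances up to `r`, rewritten as a sum over codewords. -/
lemma sum_numAt {n : ℕ} {F : Type*} [DecidableEq F] (C : Set (Fin n → F)) [Fintype C]
    (β : ℕ → ℚ) (r : ℕ) (x : Fin n → F) :
    ∑ i ∈ range (r + 1), β i * (numAt C x i : ℚ)
      = ∑ c : C, if hammingDist x c.1 ≤ r then β (hammingDist x c.1) else 0 := by
  have h1 : ∀ i, numAt C x i = #{c : C | hammingDist x c.1 = i} := by
    intro i
    have : {c ∈ C | hammingDist x c = i} = Subtype.val '' {c : C | hammingDist x c.1 = i} := by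
      ext c
      simp [and_comm]
    rw [numAt, this, Set.ncard_image_of_injective _ Subtype.val_injective,
      Set.ncard_eq_toFinset_card']
    simp
  simp_rw [h1, card_filter, Nat.cast_sum, mul_sum]
  rw [sum_comm]
  refine sum_congr rfl fun c _ => ?_
  simp

/-- The packing coefficients, indexed by the number of agreements instead of the distance, are
supported on `[4, n]` because the covering radius is at most `q - 2 = n - 4`; then
`fourier_dual` and `radial_eq_zero` show that they all vanish. -/
theorem not_upws {F : Type*} [Field F] [Fintype F] [DecidableEq F] {n : ℕ}
    (hn : n = Fintype.card F + 2) (hq : 7 ≤ Fintype.card F) (h3 : Fintype.card F % 3 = 2)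
    (C : Submodule F (Fin n → F)) (hdim : Module.finrank F C = 3)
    (hz : ∀ c ∈ C, c ≠ 0 → #{i | c i = 0} ≤ 2) : ¬ UPWS (C : Set (Fin n → F)) := by
  classical
  rintro ⟨β, hβ⟩
  set r := coveringRadius (C : Set (Fin n → F)) with hr
  have hrle : r + 4 ≤ n := by
    have : r ≤ n - 4 := by
      refine csSup_le (Set.range_nonempty _) ?_
      rintro _ ⟨x, rfl⟩
      obtain ⟨c, hc, h4⟩ := exists_agree_four hn hq h3 C hdim hz x
      have h5 := agree_add_dist x c
      have h6 := distTo_le_s8 (C := (C : Set (Fin n → F))) x hc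
      omega
    omega
  have : Fintype C := Fintype.ofFinite C
  -- `n - j` is only evaluated at agreement numbers `j ≤ n`, or at `j < 4 ≤ n`.
  let γ : ℕ → ℂ := fun j => if n - j ≤ r then ((β (n - j) : ℚ) : ℂ) else 0
  have H : ∀ x : Fin n → F, ∑ c : C, γ #{i | x i = c.1 i} = 1 := by
    intro x
    have h1 := hβ x
    rw [sum_numAt (C : Set (Fin n → F)) β r x] at h1
    have h2 := congr_arg (fun t : ℚ => (t : ℂ)) h1
    simp only [Rat.cast_sum, Rat.cast_one] at h2
    rw [← h2]
    refine sum_congr rfl fun c _ => ?_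
    have h5 : n - #{i | x i = c.1 i} = hammingDist x c.1 := by
      have := agree_add_dist x c.1
      omega
    simp only [γ, h5]
    split_ifs <;> simp
  obtain ⟨ψ, hψ⟩ := AddChar.exists_apply_ne_zero.2 (one_ne_zero (α := F))
  have hγ := radial_eq_zero ψ hψ γ (fun j hj => if_neg (by omega)) (by
    intro k hk hkn
    obtain ⟨T, -, hT⟩ := exists_subset_card_eq (show k ≤ #(univ : Finset (Fin n)) by simpa)
    obtain ⟨y, hyC, hy⟩ := dual_support (by omega) C hdim hz k hk T hT
    have hsupp : ({i | y i ≠ 0} : Finset (Fin n)) = T := by ext i; simp [← hy i]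
    refine ⟨y, by rw [hsupp, hT], fourier_dual C ψ hψ γ H y hyC ?_⟩
    rintro rfl
    have : T = ∅ := by rw [← hsupp]; simp
    rw [this] at hT
    simp at hT
    omega)
  have h0 := H 0
  rw [sum_eq_zero fun c _ => hγ _ (by
    simpa using card_le_univ ({i | (0 : Fin n → F) i = c.1 i} : Finset (Fin n)))] at h0
  exact zero_ne_one h0

/-- For odd `m > 1` and `q = 2^m`, no linear `[q+2, 3, q]_q` code is uniformly
packed in the wide sense (hence none is completely regular). -/
theorem stmt_8 {m : ℕ} (hm : 1 < m) (hodd : Odd m)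
    {F : Type*} [Field F] [Fintype F] [DecidableEq F]
    (hF : Fintype.card F = 2 ^ m)
    (C : Submodule F (Fin (2 ^ m + 2) → F)) (hC : IsLinearCode C 3 (2 ^ m)) :
    ¬ UPWS (C : Set (Fin (2 ^ m + 2) → F)) ∧
    ¬ CompletelyRegular (C : Set (Fin (2 ^ m + 2) → F)) := by
  obtain ⟨hdim, -, hmin⟩ := hC
  obtain ⟨t, rfl⟩ := hodd
  have hpow : 2 ^ (2 * t + 1) = 2 * 4 ^ t := by rw [pow_succ, pow_mul]; norm_num [mul_comm]
  have hq : 7 ≤ Fintype.card F := by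
    rw [hF]
    calc 7 ≤ 2 ^ 3 := by norm_num
      _ ≤ 2 ^ (2 * t + 1) := Nat.pow_le_pow_right (by norm_num) (by omega)
  have h3 : Fintype.card F % 3 = 2 := by
    rw [hF, hpow, Nat.mul_mod, Nat.pow_mod]
    norm_num
  have hz : ∀ c ∈ C, c ≠ 0 → #{i | c i = 0} ≤ 2 := by
    intro c hc hc0
    have h1 : 2 ^ (2 * t + 1) ≤ hammingNorm c := hmin ⟨c, hc, hc0, rfl⟩
    have h2 := agree_add_dist c 0
    rw [hammingDist_zero_right] at h2
    simp only [Pi.zero_apply] at h2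
    have arith : ∀ a b q : ℕ, q ≤ b → a + b = q + 2 → a ≤ 2 := by omega
    exact arith _ _ _ h1 h2
  have hno := not_upws (by rw [hF]) hq h3 C hdim hz
  exact ⟨hno, fun h => hno (h.upws ⟨0, C.zero_mem⟩)⟩
end

section
/- Let m > 1 and q = 2^m. Then every linear [q+2, q−1, 4]_q code is completely regular. -/
/-!
The theorem is proved by counting codewords that agree with a given vector on coordinate sets.

Put `n = q + 2`. The code has `q ^ (n - 3)` words and two distinct words differ in at least four
places, so restricting codewords to any `n - 3` coordinates is a bijection (`exists_interpolate`).
Hence for a set `T` of at most `n - 3` coordinates the number of codewords agreeing with `v` on `T`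
does not depend on `v` (`card_agree_eq`). Summing over all `T` of size `n - t` gives
`∑ s, B_{v,s} * (n - s).choose (n - t)` (`sum_agree`), a system that is triangular in the `B_{v,s}`;
so all `B_{v,t}` with `t ≥ 3` are determined by `B_{v,0}`, `B_{v,1}`, `B_{v,2}`.

It remains to see that these three depend only on `d(v,C)`. If `d(v,C) ≤ 1`, the nearest codeword is
the only one at distance at most `2`. If `d(v,C) ≥ 2`, then `B_{v,0} = B_{v,1} = 0`, and
`2 * B_{v,2} = n` (`two_mul_numAt_two`) because for every coordinate `i` exactly one codeword at
distance `2` differs from `v` at `i`. Geometrically: the columns of a parity check matrix form a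
hyperoval, and every line through one of its points meets it in exactly one further point. This
last fact comes from a perfect packing (`exists_covering`): there are
`q * (1 + (q + 1) * (q - 1)) = q ^ 3` vectors vanishing outside `i` and one further coordinate,
and they lie in different cosets of `C`.
-/

open Finset

/-! ### Codewords as a finite set -/

set_option linter.unusedSectionVars false

open Classical in
/-- The finite set of codewords, for counting arguments. -/
noncomputable def words {n : ℕ} {F : Type*} [Field F] [Fintype F]
    (C : Submodule F (Fin n → F)) : Finset (Fin n → F) :=
  Finset.univ.filter (· ∈ C)

lemma mem_words {n : ℕ} {F : Type*} [Field F] [Fintype F]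
    {C : Submodule F (Fin n → F)} {c : Fin n → F} : c ∈ words C ↔ c ∈ C := by
  simp [words]

lemma numAt_eq {n : ℕ} {F : Type*} [Field F] [Fintype F] [DecidableEq F]
    (C : Submodule F (Fin n → F)) (v : Fin n → F) (t : ℕ) :
    numAt (C : Set (Fin n → F)) v t = ((words C).filter (fun c => hammingDist v c = t)).card := by
  rw [numAt, ← Set.ncard_coe_finset]
  congr 1
  ext c
  simp [mem_words]

lemma hammingDist_le_of_agree {n : ℕ} {F : Type*} [DecidableEq F] {c d : Fin n → F}
    (S : Finset (Fin n)) (h : ∀ i ∉ S, c i = d i) : hammingDist c d ≤ S.card := by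
  apply Finset.card_le_card
  intro i hi
  by_contra hS
  exact (Finset.mem_filter.1 hi).2 (h i hS)

/-! ### Agreement with a vector on coordinate sets -/

section

variable {n : ℕ} {F : Type*} [Field F] [Fintype F] [DecidableEq F]
  {C : Submodule F (Fin n → F)}

/-- Any `n - 3` coordinates form an information set, so codewords can take arbitrary values on
every set of at most `n - 3` coordinates. -/
lemma exists_interpolate (hdim : Module.finrank F C + 3 = n)
    (hsep : ∀ c ∈ C, ∀ d ∈ C, hammingDist c d ≤ 3 → c = d)
    (T : Finset (Fin n)) (hT : T.card + 3 ≤ n) (w : Fin n → F) :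
    ∃ c ∈ C, ∀ i ∈ T, c i = w i := by
  obtain ⟨T', hTT', hT'⟩ := Finset.exists_superset_card_eq (s := T) (n := n - 3) (by omega)
    (by simp)
  let f : C →ₗ[F] (T' → F) :=
    { toFun := fun c i => c.1 i
      map_add' := fun _ _ => rfl
      map_smul' := fun _ _ => rfl }
  have hinj : Function.Injective f := by
    intro c d hcd
    apply Subtype.ext
    apply hsep c.1 c.2 d.1 d.2
    refine (hammingDist_le_of_agree T'ᶜ fun i hi => ?_).trans ?_
    · exact congrFun hcd ⟨i, by simpa using hi⟩
    · rw [Finset.card_compl, hT', Fintype.card_fin]; omega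
  have hsurj : Function.Surjective f := by
    refine (LinearMap.injective_iff_surjective_of_finrank_eq_finrank ?_).1 hinj
    rw [Module.finrank_fintype_fun_eq_card, Fintype.card_coe, hT']; omega
  obtain ⟨c, hc⟩ := hsurj fun i => w i
  exact ⟨c.1, c.2, fun i hi => congrFun hc ⟨i, hTT' hi⟩⟩

lemma card_agree_eq (hdim : Module.finrank F C + 3 = n)
    (hsep : ∀ c ∈ C, ∀ d ∈ C, hammingDist c d ≤ 3 → c = d)
    (T : Finset (Fin n)) (hT : T.card + 3 ≤ n) (u v : Fin n → F) :
    ((words C).filter (fun c => ∀ i ∈ T, u i = c i)).card =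
      ((words C).filter (fun c => ∀ i ∈ T, v i = c i)).card := by
  -- translation by a codeword that equals `v - u` on `T`
  obtain ⟨e, he, heT⟩ := exists_interpolate hdim hsep T hT (v - u)
  refine Finset.card_bij' (fun c _ => c + e) (fun c _ => c - e) ?_ ?_ ?_ ?_
  · intro c hc
    simp only [Finset.mem_filter, mem_words] at hc ⊢
    refine ⟨C.add_mem hc.1 he, fun i hi => ?_⟩
    simp [heT i hi, ← hc.2 i hi]
  · intro c hc
    simp only [Finset.mem_filter, mem_words] at hc ⊢
    refine ⟨C.sub_mem hc.1 he, fun i hi => ?_⟩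
    simp [heT i hi, ← hc.2 i hi]
  · intro c _; simp
  · intro c _; simp

/-- Double counting of pairs `(T, c)` where `T` has `j` elements and the codeword `c` agrees with
`v` on `T`. -/
lemma sum_agree (C : Submodule F (Fin n → F)) (v : Fin n → F) (j : ℕ) :
    ∑ T ∈ Finset.powersetCard j (Finset.univ : Finset (Fin n)),
        ((words C).filter (fun c => ∀ i ∈ T, v i = c i)).card =
      ∑ s ∈ Finset.range (n + 1),
        numAt (C : Set (Fin n → F)) v s * (n - s).choose j := by
  have h1 : ∀ c : Fin n → F,
      ((Finset.powersetCard j (Finset.univ : Finset (Fin n))).filter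
        (fun T => ∀ i ∈ T, v i = c i)).card = (n - hammingDist v c).choose j := by
    intro c
    have hcard : (Finset.univ.filter (fun i => v i = c i)).card = n - hammingDist v c := by
      have := Finset.card_filter_add_card_filter_not (s := (Finset.univ : Finset (Fin n)))
        (fun i => v i = c i)
      rw [Finset.card_univ, Fintype.card_fin] at this
      change _ + hammingDist v c = n at this
      omega
    rw [← hcard, ← Finset.card_powersetCard]
    congr 1
    ext T
    simp [Finset.mem_powersetCard, Finset.subset_iff, and_comm]
  calc _ = ∑ c ∈ words C, (n - hammingDist v c).choose j := by
        simp_rw [← h1]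
        exact Finset.sum_card_bipartiteAbove_eq_sum_card_bipartiteBelow
          (fun (T : Finset (Fin n)) (c : Fin n → F) => ∀ i ∈ T, v i = c i)
    _ = _ := by
        rw [← Finset.sum_fiberwise_of_maps_to (s := words C) (t := Finset.range (n + 1))
          (g := fun c => hammingDist v c)]
        · refine Finset.sum_congr rfl fun s _ => ?_
          rw [numAt_eq, ← smul_eq_mul]
          apply Finset.sum_eq_card_nsmul
          intro c hc
          rw [(Finset.mem_filter.1 hc).2]
        · intro c _
          have : hammingDist v c ≤ Fintype.card (Fin n) := hammingDist_le_card_fintype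
          rw [Fintype.card_fin] at this
          exact Finset.mem_range.2 (by omega)

/-- The binomial system is triangular with unit diagonal, so `B_{v,0}`, `B_{v,1}` and `B_{v,2}`
determine every `B_{v,t}`. -/
lemma numAt_eq_of_small (hdim : Module.finrank F C + 3 = n)
    (hsep : ∀ c ∈ C, ∀ d ∈ C, hammingDist c d ≤ 3 → c = d) (u v : Fin n → F)
    (h : ∀ t ≤ 2, numAt (C : Set (Fin n → F)) u t = numAt (C : Set (Fin n → F)) v t) (t : ℕ) :
    numAt (C : Set (Fin n → F)) u t = numAt (C : Set (Fin n → F)) v t := by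
  induction t using Nat.strong_induction_on with
  | _ t ih =>
    rcases Nat.lt_or_ge 2 t with ht | ht
    swap
    · exact h t ht
    rcases Nat.lt_or_ge n t with hnt | hnt
    · have h0 : ∀ w : Fin n → F, numAt (C : Set (Fin n → F)) w t = 0 := by
        intro w
        rw [numAt_eq, Finset.card_eq_zero, Finset.filter_eq_empty_iff]
        intro c _ hc
        have : hammingDist w c ≤ Fintype.card (Fin n) := hammingDist_le_card_fintype
        rw [Fintype.card_fin] at this
        omega
      rw [h0, h0]
    have key : ∑ s ∈ Finset.range (n + 1),
          numAt (C : Set (Fin n → F)) u s * (n - s).choose (n - t) =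
        ∑ s ∈ Finset.range (n + 1),
          numAt (C : Set (Fin n → F)) v s * (n - s).choose (n - t) := by
      rw [← sum_agree, ← sum_agree]
      refine Finset.sum_congr rfl fun T hT => card_agree_eq hdim hsep T ?_ u v
      rw [(Finset.mem_powersetCard.1 hT).2]; omega
    have tr : ∀ w : Fin n → F, ∑ s ∈ Finset.range (n + 1),
          numAt (C : Set (Fin n → F)) w s * (n - s).choose (n - t) =
        ∑ s ∈ Finset.range t, numAt (C : Set (Fin n → F)) w s * (n - s).choose (n - t) +
          numAt (C : Set (Fin n → F)) w t := by
      intro w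
      rw [← Finset.sum_subset (s₁ := Finset.range (t + 1))
        (Finset.range_subset_range.2 (by omega)), Finset.sum_range_succ]
      · simp
      · intro s hs hs'
        simp only [Finset.mem_range] at hs hs'
        rw [Nat.choose_eq_zero_of_lt (by omega), mul_zero]
    rw [tr, tr, Finset.sum_congr rfl fun s hs => by rw [ih s (Finset.mem_range.1 hs)]] at key
    exact Nat.add_left_cancel key

end

/-! ### Codewords within distance two -/

section

variable {n : ℕ} {F : Type*} [Field F] [Fintype F] [DecidableEq F]
  {C : Submodule F (Fin n → F)}

/-- A vector vanishing outside `i` and at most one further coordinate, encoded by its entry at `i`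
and, if there is a nonzero entry elsewhere, the position and value of that entry. -/
def starVec (i : Fin n) : F × Option ({j : Fin n // j ≠ i} × Fˣ) → Fin n → F
  | (a, none) => Pi.single i a
  | (a, some (j, b)) => Pi.single i a + Pi.single j.1 (b : F)

lemma starVec_support (i : Fin n) (p : F × Option ({j : Fin n // j ≠ i} × Fˣ)) :
    ∃ j, ∀ k, k ≠ i → k ≠ j → starVec i p k = 0 := by
  rcases p with ⟨a, _ | ⟨j, b⟩⟩
  · exact ⟨i, fun k hk _ => by simp [starVec, hk]⟩
  · exact ⟨j, fun k hk hkj => by simp [starVec, hk, hkj]⟩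

lemma starVec_injective (i : Fin n) : Function.Injective (starVec (F := F) i) := by
  rintro ⟨a, x⟩ ⟨a', x'⟩ h
  have hval : ∀ a x, starVec (F := F) i (a, x) i = a := by
    rintro a (_ | ⟨j, b⟩)
    · simp [starVec]
    · simp [starVec, j.2.symm]
  have ha : a = a' := by rw [← hval a x, h, hval]
  subst ha
  rcases x with _ | ⟨j, b⟩ <;> rcases x' with _ | ⟨j', b'⟩
  · rfl
  · exact absurd (congrFun h j') (by simp [starVec])
  · exact absurd (congrFun h j) (by simp [starVec])
  · have h1 := congrFun h j
    simp only [starVec, Pi.add_apply, Pi.single_eq_same, add_right_inj] at h1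
    by_cases hj : j.1 = j'.1
    · obtain rfl := Subtype.ext hj
      simp only [Pi.single_eq_same] at h1
      rw [Units.ext h1]
    · rw [Pi.single_eq_of_ne hj] at h1
      exact absurd h1 b.ne_zero

/-- Sums of a codeword and a `starVec i` are pairwise distinct by the minimum distance, and there
are `q ^ (n - 3) * q ^ 3` of them, so they exhaust the space. -/
lemma exists_covering (hdim : Module.finrank F C + 3 = n) (hn : n = Fintype.card F + 2)
    (hsep : ∀ c ∈ C, ∀ d ∈ C, hammingDist c d ≤ 3 → c = d) (i : Fin n) (v : Fin n → F) :
    ∃ c ∈ C, ∃ j, ∀ k, k ≠ i → k ≠ j → v k = c k := by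
  let f : C × (F × Option ({j : Fin n // j ≠ i} × Fˣ)) → (Fin n → F) :=
    fun p => p.1.1 + starVec i p.2
  have hinj : Function.Injective f := by
    rintro ⟨c, p⟩ ⟨d, p'⟩ h
    obtain ⟨j, hj⟩ := starVec_support i p
    obtain ⟨j', hj'⟩ := starVec_support i p'
    have hcd : c = d := by
      apply Subtype.ext
      apply hsep c.1 c.2 d.1 d.2
      refine (hammingDist_le_of_agree {i, j, j'} fun k hk => ?_).trans Finset.card_le_three
      simp only [Finset.mem_insert, Finset.mem_singleton, not_or] at hk
      have := congrFun h k
      simpa [f, hj k hk.1 hk.2.1, hj' k hk.1 hk.2.2] using this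
    subst hcd
    exact congrArg _ (starVec_injective i (add_left_cancel h))
  have hcard : Nat.card (C × (F × Option ({j : Fin n // j ≠ i} × Fˣ))) = Nat.card (Fin n → F) := by
    have hC : Nat.card C = Fintype.card F ^ Module.finrank F C := by
      rw [Module.natCard_eq_pow_finrank (K := F), Nat.card_eq_fintype_card]
    have hJ : Fintype.card {j : Fin n // j ≠ i} = Fintype.card F + 1 := by
      rw [Fintype.card_subtype_compl, Fintype.card_fin, Fintype.card_subtype_eq]; omega
    have hpos : 0 < Fintype.card F := Fintype.card_pos
    have hstar : 1 + (Fintype.card F + 1) * (Fintype.card F - 1) = Fintype.card F ^ 2 := by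
      obtain ⟨r, hr⟩ := Nat.exists_eq_add_of_le' hpos
      rw [hr, Nat.add_sub_cancel]; ring
    have hO : Nat.card (Option ({j : Fin n // j ≠ i} × Fˣ)) = Fintype.card F ^ 2 := by
      rw [Nat.card_eq_fintype_card, Fintype.card_option, Fintype.card_prod, hJ,
        Fintype.card_units, ← hstar, add_comm]
    have hV : Nat.card (Fin n → F) = Fintype.card F ^ (Module.finrank F C + 3) := by
      rw [Nat.card_eq_fintype_card, Fintype.card_fun, Fintype.card_fin, hdim]
    rw [Nat.card_prod, Nat.card_prod, hC, hO, hV, Nat.card_eq_fintype_card]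
    ring
  obtain ⟨⟨c, p⟩, hcp⟩ := ((Nat.bijective_iff_injective_and_card f).2 ⟨hinj, hcard⟩).2 v
  obtain ⟨j, hj⟩ := starVec_support i p
  refine ⟨c.1, c.2, j, fun k hk hkj => ?_⟩
  rw [← hcp]
  simp [f, hj k hk hkj]

lemma two_mul_numAt_two (hdim : Module.finrank F C + 3 = n) (hn : n = Fintype.card F + 2)
    (hsep : ∀ c ∈ C, ∀ d ∈ C, hammingDist c d ≤ 3 → c = d) (v : Fin n → F)
    (hv : ∀ c ∈ C, 2 ≤ hammingDist v c) :
    2 * numAt (C : Set (Fin n → F)) v 2 = n := by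
  set S := (words C).filter (fun c => hammingDist v c = 2) with hS
  have hSm : ∀ c, c ∈ S ↔ c ∈ C ∧ hammingDist v c = 2 := by
    intro c; simp [hS, mem_words]
  have h1 : ∀ i : Fin n, (S.filter (fun c => v i ≠ c i)).card = 1 := by
    intro i
    obtain ⟨c, hc, j, hj⟩ := exists_covering hdim hn hsep i v
    have hle : ∀ R : Finset (Fin n), (∀ k ∉ R, v k = c k) → 2 ≤ R.card := fun R hR =>
      (hv c hc).trans (hammingDist_le_of_agree R hR)
    have hd : hammingDist v c = 2 := by
      apply le_antisymm _ (hv c hc)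
      refine (hammingDist_le_of_agree {i, j} fun k hk => ?_).trans Finset.card_le_two
      simp only [Finset.mem_insert, Finset.mem_singleton, not_or] at hk
      exact hj k hk.1 hk.2
    rw [Finset.card_eq_one]
    refine ⟨c, Finset.eq_singleton_iff_unique_mem.2 ⟨?_, ?_⟩⟩
    · refine Finset.mem_filter.2 ⟨(hSm c).2 ⟨hc, hd⟩, fun hi => ?_⟩
      -- agreement at `i` would leave only the coordinate `j`
      have := hle {j} fun k hk => by
        by_cases hki : k = i
        · rw [hki, hi]
        · exact hj k hki (by simpa using hk)
      simp at this
    · intro d hd'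
      obtain ⟨hdS, hdi⟩ := Finset.mem_filter.1 hd'
      obtain ⟨hdC, hd2⟩ := (hSm d).1 hdS
      apply hsep d hdC c hc
      -- both difference supports contain `i`, so their union has at most three elements
      have hA : (insert j (Finset.univ.filter (fun k => v k ≠ d k))).card ≤ 3 :=
        (Finset.card_insert_le _ _).trans (by change hammingDist v d + 1 ≤ 3; omega)
      refine (hammingDist_le_of_agree _ fun k hk => ?_).trans hA
      simp only [Finset.mem_insert, Finset.mem_filter, Finset.mem_univ, true_and, not_or,
        not_not] at hk
      rw [← hk.2]
      exact hj k (fun hki => hdi (hki ▸ hk.2)) hk.1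
  have h2 := Finset.sum_card_bipartiteAbove_eq_sum_card_bipartiteBelow
    (s := (Finset.univ : Finset (Fin n))) (t := S) (fun i c => v i ≠ c i)
  have h3 : ∀ c ∈ S,
      (Finset.bipartiteBelow (fun i (c : Fin n → F) => v i ≠ c i) Finset.univ c).card = 2 :=
    fun c hc => ((hSm c).1 hc).2
  have h4 : ∀ i ∈ (Finset.univ : Finset (Fin n)),
      (Finset.bipartiteAbove (fun i (c : Fin n → F) => v i ≠ c i) S i).card = 1 := fun i _ => h1 i
  rw [Finset.sum_congr rfl h4, Finset.sum_congr rfl h3] at h2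
  simp only [Finset.sum_const, Finset.card_univ, Fintype.card_fin, smul_eq_mul, mul_one] at h2
  rw [numAt_eq, ← hS, mul_comm]
  exact h2.symm

/-- If `d(v,C) ≤ 1`, then the nearest codeword is the only one within distance two of `v`. -/
lemma numAt_of_near (hsep : ∀ c ∈ C, ∀ d ∈ C, hammingDist c d ≤ 3 → c = d) (v c : Fin n → F)
    (hc : c ∈ C) (h1 : hammingDist v c ≤ 1) (t : ℕ) (ht : t ≤ 2) :
    numAt (C : Set (Fin n → F)) v t = if hammingDist v c = t then 1 else 0 := by
  have huniq : ∀ d ∈ C, hammingDist v d = t → d = c := by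
    intro d hd hdt
    apply hsep d hd c hc
    have := hammingDist_triangle d v c
    rw [hammingDist_comm d v] at this
    omega
  rw [numAt_eq]
  split_ifs with h
  · rw [Finset.card_eq_one]
    refine ⟨c, Finset.eq_singleton_iff_unique_mem.2 ⟨?_, ?_⟩⟩
    · simp [mem_words, hc, h]
    · intro d hd
      simp only [Finset.mem_filter, mem_words] at hd
      exact huniq d hd.1 hd.2
  · rw [Finset.card_eq_zero, Finset.filter_eq_empty_iff]
    intro d hd hdt
    exact h (huniq d (mem_words.1 hd) hdt ▸ hdt)

lemma numAt_small (hdim : Module.finrank F C + 3 = n) (hn : n = Fintype.card F + 2)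
    (hsep : ∀ c ∈ C, ∀ d ∈ C, hammingDist c d ≤ 3 → c = d) (u v : Fin n → F)
    (h : distTo (C : Set (Fin n → F)) u = distTo (C : Set (Fin n → F)) v) (t : ℕ) (ht : t ≤ 2) :
    numAt (C : Set (Fin n → F)) u t = numAt (C : Set (Fin n → F)) v t := by
  have hatt : ∀ w : Fin n → F, ∃ c ∈ C, hammingDist w c = distTo (C : Set (Fin n → F)) w := by
    intro w
    have : (hammingDist w '' (C : Set (Fin n → F))).Nonempty :=
      ⟨_, 0, C.zero_mem, rfl⟩
    exact Nat.sInf_mem this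
  have hmin : ∀ w : Fin n → F, ∀ c ∈ C, distTo (C : Set (Fin n → F)) w ≤ hammingDist w c :=
    fun w c hc => Nat.sInf_le ⟨c, hc, rfl⟩
  obtain ⟨cu, hcu, hu⟩ := hatt u
  obtain ⟨cv, hcv, hv⟩ := hatt v
  rcases Nat.lt_or_ge (distTo (C : Set (Fin n → F)) u) 2 with hk | hk
  · rw [numAt_of_near hsep u cu hcu (by omega) t ht, numAt_of_near hsep v cv hcv (by omega) t ht,
      hu, hv, h]
  · have hu2 : ∀ c ∈ C, 2 ≤ hammingDist u c := fun c hc => hk.trans (hmin u c hc)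
    have hv2 : ∀ c ∈ C, 2 ≤ hammingDist v c := fun c hc => (h ▸ hk).trans (hmin v c hc)
    rcases ht.lt_or_eq with ht | rfl
    · have h0 : ∀ w : Fin n → F, (∀ c ∈ C, 2 ≤ hammingDist w c) →
          numAt (C : Set (Fin n → F)) w t = 0 := by
        intro w hw
        rw [numAt_eq, Finset.card_eq_zero, Finset.filter_eq_empty_iff]
        intro c hc hct
        have := hw c (mem_words.1 hc)
        omega
      rw [h0 u hu2, h0 v hv2]
    · have := two_mul_numAt_two hdim hn hsep u hu2
      have := two_mul_numAt_two hdim hn hsep v hv2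
      omega

end

/-! ### Complete regularity -/

/-- For `m > 1` and `q = 2^m`, every linear `[q+2, q-1, 4]_q` code is
completely regular. -/
theorem stmt_9 {m : ℕ} (hm : 1 < m)
    {F : Type*} [Field F] [Fintype F] [DecidableEq F]
    (hF : Fintype.card F = 2 ^ m)
    (C : Submodule F (Fin (2 ^ m + 2) → F))
    (hC : IsLinearCode C (2 ^ m - 1) 4) :
    CompletelyRegular (C : Set (Fin (2 ^ m + 2) → F)) := by
  obtain ⟨hk, -, hd⟩ := hC
  have hpos : 0 < 2 ^ m := by positivity
  have hdim : Module.finrank F C + 3 = 2 ^ m + 2 := by omega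
  have hsep : ∀ c ∈ C, ∀ d ∈ C, hammingDist c d ≤ 3 → c = d := by
    intro c hc d hd' hcd
    by_contra hne
    have := hd ⟨-c + d, C.add_mem (C.neg_mem hc) hd',
      fun h => hne (neg_add_eq_zero.1 h), rfl⟩
    rw [← hammingDist_eq_hammingNorm] at this
    omega
  intro u v huv t
  exact numAt_eq_of_small hdim hsep u v
    (fun s hs => numAt_small hdim (by rw [hF]) hsep u v huv s hs) t
end

section
/- Let q = 2^m with m ≥ 1. Then every linear [q+1, 2, q]_q code is uniformly packed in the wide sense. -/
/-!
Write `q = 2 ^ m` and `n = q + 1`. Any two distinct coordinates form an information set of `C`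
(`existsUnique_word`): a codeword vanishing on both has weight at most `q - 1`, hence is zero, and
`C` has dimension `2`. Let `A(x, c)` be the number of coordinates where `x` and `c` agree. Counting
ordered pairs of distinct coordinates and the unique codeword that agrees with `x` on each gives
`∑ c ∈ C, A(x, c) * (A(x, c) - 1) = n * (n - 1)` for every `x` (`sum_agree`). Since
`A(x, c) = n - d(x, c)`, the coefficients `β i = (n - i) * (n - i - 1) / (n * (n - 1))` satisfy the
packing identity as soon as the sum is allowed to reach every `i` with `β i ≠ 0`, that is, every
`i ≤ q - 1`.

It remains to see that the covering radius is at least `q - 1`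
(`exists_far`); only here is `q` even. Let `a, b` be a basis of `C` and, squaring being
bijective in characteristic `2`, let `x` satisfy `x i ^ 2 = a i * b i`. If `x` agrees with
`s • a + t • b` at `i`, then `(a i, b i)` is a zero of the quadratic form
`s² X² + X Y + t² Y²`. This form is nonzero and the points `(a i, b i)` are pairwise
non-proportional, so at most two coordinates agree. Geometrically,
the points `(a i : b i : x i)` lie on the conic `Z² = X Y`, and `(0 : 0 : 1)` is its nucleus.
-/


open Finset

section Aux

/-- The coordinates in which `x` and `c` agree. -/
def agree {n : ℕ} {F : Type*} [DecidableEq F] (x c : Fin n → F) : Finset (Fin n) := univ.filter fun i => x i = c i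

lemma hammingDist_add_card_agree {n : ℕ} {F : Type*} [DecidableEq F] (x c : Fin n → F) :
    hammingDist x c + (agree x c).card = n := by
  have h := Finset.card_filter_add_card_filter_not (s := (univ : Finset (Fin n)))
    (fun i => x i = c i)
  simp only [Finset.card_univ, Fintype.card_fin] at h
  unfold agree hammingDist
  simp only [ne_eq]
  omega

variable {F : Type*} [Field F] [DecidableEq F]

/-- Two coordinates already determine a codeword. -/
lemma eq_zero_of_two_zeros {q : ℕ} {C : Submodule F (Fin (q + 1) → F)}
    (hC : IsLinearCode C 2 q) {c : Fin (q + 1) → F} (hc : c ∈ C) {i j : Fin (q + 1)}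
    (hij : i ≠ j) (hi : c i = 0) (hj : c j = 0) : c = 0 := by
  by_contra h0
  have h1 : q ≤ hammingNorm c := hC.2.2 ⟨c, hc, h0, rfl⟩
  have h2 := hammingDist_add_card_agree c 0
  rw [hammingDist_zero_right] at h2
  have h3 : ({i, j} : Finset (Fin (q + 1))).card ≤ (agree c 0).card := by
    apply Finset.card_le_card
    intro k hk
    simp only [Finset.mem_insert, Finset.mem_singleton] at hk
    rcases hk with rfl | rfl <;> simp [agree, hi, hj]
  rw [Finset.card_pair hij] at h3
  omega

lemma existsUnique_word {q : ℕ} {C : Submodule F (Fin (q + 1) → F)}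
    (hC : IsLinearCode C 2 q) {i j : Fin (q + 1)} (hij : i ≠ j) (x : Fin (q + 1) → F) :
    ∃! c, c ∈ C ∧ x i = c i ∧ x j = c j := by
  let f : C →ₗ[F] F × F :=
    ((LinearMap.proj i).prod (LinearMap.proj j)).comp C.subtype
  have hinj : Function.Injective f := by
    rw [← LinearMap.ker_eq_bot, LinearMap.ker_eq_bot']
    rintro ⟨c, hc⟩ h
    have h1 : c i = 0 := congrArg Prod.fst h
    have h2 : c j = 0 := congrArg Prod.snd h
    exact Subtype.ext (eq_zero_of_two_zeros hC hc hij h1 h2)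
  have hsurj : Function.Surjective f := by
    rw [← LinearMap.injective_iff_surjective_of_finrank_eq_finrank]
    · exact hinj
    · rw [hC.1, Module.finrank_prod, Module.finrank_self]
  obtain ⟨⟨c, hc⟩, h⟩ := hsurj (x i, x j)
  have h1 : c i = x i := congrArg Prod.fst h
  have h2 : c j = x j := congrArg Prod.snd h
  refine ⟨c, ⟨hc, h1.symm, h2.symm⟩, ?_⟩
  rintro d ⟨hd, hd1, hd2⟩
  rw [← sub_eq_zero]
  exact eq_zero_of_two_zeros hC (C.sub_mem hd hc) hij (by simp [h1, hd1]) (by simp [h2, hd2])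

open Classical in
lemma sum_agree_s11 [Fintype F] {q : ℕ} {C : Submodule F (Fin (q + 1) → F)}
    (hC : IsLinearCode C 2 q) (x : Fin (q + 1) → F) :
    ∑ c ∈ univ.filter (fun c => c ∈ C), (agree x c).card * ((agree x c).card - 1)
      = (q + 1) * q := by
  have h1 : ∀ c : Fin (q + 1) → F, (agree x c).card * ((agree x c).card - 1)
      = ∑ p ∈ (univ : Finset (Fin (q + 1))).offDiag,
          if x p.1 = c p.1 ∧ x p.2 = c p.2 then 1 else 0 := by
    intro c
    rw [Nat.mul_sub_one, ← Finset.offDiag_card, ← Finset.card_filter]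
    congr 1
    ext p
    simp only [agree, Finset.mem_offDiag, Finset.mem_filter, Finset.mem_univ, true_and]
    tauto
  simp_rw [h1]
  rw [Finset.sum_comm]
  have h2 : ∀ p ∈ (univ : Finset (Fin (q + 1))).offDiag,
      (∑ c ∈ univ.filter (fun c => c ∈ C),
        if x p.1 = c p.1 ∧ x p.2 = c p.2 then 1 else 0) = 1 := by
    intro p hp
    rw [← Finset.card_filter, Finset.card_eq_one]
    obtain ⟨c, hc, hu⟩ := existsUnique_word hC (Finset.mem_offDiag.1 hp).2.2 x
    refine ⟨c, ?_⟩
    ext d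
    simp only [Finset.mem_filter, Finset.mem_univ, true_and, Finset.mem_singleton]
    exact ⟨fun h => hu d h, fun h => h ▸ hc⟩
  rw [Finset.sum_congr rfl h2, Finset.sum_const, Finset.offDiag_card]
  simp only [Finset.card_univ, Fintype.card_fin, smul_eq_mul, mul_one]
  rw [← Nat.mul_sub_one, Nat.add_sub_cancel]

/-- The coordinate vectors `(a i, b i)` and `(a j, b j)` of a basis `a, b` of `C` are not
proportional. -/
lemma det_ne_zero {q : ℕ} {C : Submodule F (Fin (q + 1) → F)}
    (hC : IsLinearCode C 2 q) {a b : Fin (q + 1) → F}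
    (hspan : ∀ c ∈ C, ∃ s t : F, c = s • a + t • b) {i j : Fin (q + 1)} (hij : i ≠ j) :
    a i * b j - a j * b i ≠ 0 := by
  -- Words taking the values `(1, 0)` and `(0, 1)` at `(i, j)` give an inverse of the `2 × 2` matrix.
  obtain ⟨c, ⟨hc, hci, hcj⟩, -⟩ := existsUnique_word hC hij (Pi.single i 1)
  obtain ⟨d, ⟨hd, hdi, hdj⟩, -⟩ := existsUnique_word hC hij (Pi.single j 1)
  obtain ⟨s, t, rfl⟩ := hspan c hc
  obtain ⟨u, v, rfl⟩ := hspan d hd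
  simp only [Pi.single_eq_same, Pi.single_eq_of_ne hij, Pi.single_eq_of_ne hij.symm,
    Pi.add_apply, Pi.smul_apply, smul_eq_mul] at hci hcj hdi hdj
  intro h
  apply one_ne_zero (α := F)
  linear_combination (s * v - t * u) * h + hci + (s * a i + t * b i) * hdj
    - (s * a j + t * b j) * hdi

/-- In characteristic `2` some vector is at distance at least `q - 1` from `C`. -/
lemma exists_far [Fintype F] [CharP F 2] {q : ℕ} {C : Submodule F (Fin (q + 1) → F)}
    (hC : IsLinearCode C 2 q) :
    ∃ x : Fin (q + 1) → F, ∀ c ∈ C, q ≤ hammingDist x c + 1 := by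
  obtain ⟨a, b, hspan⟩ : ∃ a b : Fin (q + 1) → F, ∀ c ∈ C, ∃ s t : F, c = s • a + t • b := by
    let B := Module.finBasisOfFinrankEq F C hC.1
    refine ⟨B 0, B 1, fun c hc => ⟨B.repr ⟨c, hc⟩ 0, B.repr ⟨c, hc⟩ 1, ?_⟩⟩
    have h := congrArg Subtype.val (B.sum_repr ⟨c, hc⟩)
    rw [Fin.sum_univ_two] at h
    exact h.symm
  have hsq : ∀ y : F, ∃ z : F, z ^ 2 = y := fun y => (frobeniusEquiv F 2).surjective y
  choose x hx using fun i => hsq (a i * b i)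
  refine ⟨x, fun c hc => ?_⟩
  have hadd := hammingDist_add_card_agree x c
  by_contra hlt
  have h3 : 2 < (agree x c).card := by omega
  obtain ⟨i, hi, j, hj, k, hk, hij, hik, hjk⟩ := Finset.two_lt_card.1 h3
  obtain ⟨s, t, rfl⟩ := hspan c hc
  have h2 : (2 : F) = 0 := CharTwo.two_eq_zero
  have hQ : ∀ l ∈ agree x (s • a + t • b),
      s ^ 2 * a l ^ 2 + a l * b l + t ^ 2 * b l ^ 2 = 0 := by
    intro l hl
    have hl' : x l = s * a l + t * b l := by simpa [agree] using hl
    have := hx l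
    rw [hl'] at this
    linear_combination this + (a l * b l - s * t * a l * b l) * h2
  have key := mul_ne_zero (mul_ne_zero (det_ne_zero hC hspan hij) (det_ne_zero hC hspan hik))
    (det_ne_zero hC hspan hjk)
  apply key
  -- With `D` the determinants, `D i j • v k = D k j • v i + D i k • v j`; expanding the quadratic
  -- form at this vector leaves only the polar term, which modulo `2` is the product of the three
  -- determinants.
  linear_combination
    (-(a i * b j - a j * b i) ^ 2) * hQ k hk + (a k * b j - a j * b k) ^ 2 * hQ i hi
      + (a i * b k - a k * b i) ^ 2 * hQ j hj
      + (a k * b j - a j * b k) * (a i * b k - a k * b i)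
        * (s ^ 2 * a i * a j + a j * b i + t ^ 2 * b i * b j) * h2

end Aux

/-- For `q = 2^m` with `m ≥ 1`, every linear `[q+1, 2, q]_q` code is uniformly
packed in the wide sense. -/
theorem stmt_11 {m : ℕ} (hm : 1 ≤ m)
    {F : Type*} [Field F] [Fintype F] [DecidableEq F]
    (hF : Fintype.card F = 2 ^ m)
    (C : Submodule F (Fin (2 ^ m + 1) → F)) (hC : IsLinearCode C 2 (2 ^ m)) :
    UPWS (C : Set (Fin (2 ^ m + 1) → F)) := by
  classical
  have hchar : CharP F 2 := by
    rw [← ringChar.eq_iff]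
    obtain ⟨p, hp⟩ := CharP.exists F
    obtain ⟨n, hpp, hn⟩ := FiniteField.card F p
    have : p ∣ 2 ^ m := by
      rw [← hF, hn]
      exact dvd_pow_self p n.ne_zero
    have h2 : p = 2 := (Nat.prime_dvd_prime_iff_eq hpp Nat.prime_two).1 (hpp.dvd_of_dvd_pow this)
    exact h2 ▸ ringChar.eq F p ▸ rfl
  have hq : 0 < 2 ^ m := by positivity
  generalize 2 ^ m = q at *
  have hrad : q ≤ coveringRadius (C : Set (Fin (q + 1) → F)) + 1 := by
    obtain ⟨x, hx⟩ := exists_far hC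
    have h1 : q ≤ distTo (C : Set (Fin (q + 1) → F)) x + 1 := by
      obtain ⟨c, hc, h⟩ := Nat.sInf_mem
        (s := hammingDist x '' (C : Set (Fin (q + 1) → F))) ⟨_, 0, C.zero_mem, rfl⟩
      unfold distTo
      rw [← h]
      exact hx c hc
    have h2 : distTo (C : Set (Fin (q + 1) → F)) x ≤ coveringRadius (C : Set (Fin (q + 1) → F)) :=
      le_csSup (Set.finite_range _).bddAbove ⟨x, rfl⟩
    omega
  -- Truncated subtraction makes `β i = 0` for every `i ≥ q`, including `i > q + 1`.
  refine ⟨fun i => (((q + 1 - i) * (q + 1 - i - 1) : ℕ) : ℚ) / (((q + 1) * q : ℕ) : ℚ), ?_⟩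
  intro x
  have hnum : ∀ i, numAt (C : Set (Fin (q + 1) → F)) x i
      = ∑ c ∈ univ.filter (fun c => c ∈ C), if hammingDist x c = i then 1 else 0 := by
    intro i
    rw [← Finset.card_filter, Finset.filter_filter, numAt, ← Set.ncard_coe_finset]
    congr 1
    ext c
    simp
  have hnat : ∑ i ∈ Finset.range (coveringRadius (C : Set (Fin (q + 1) → F)) + 1),
      ((q + 1 - i) * (q + 1 - i - 1)) * numAt (C : Set (Fin (q + 1) → F)) x i = (q + 1) * q := by
    rw [← sum_agree_s11 hC x]
    simp_rw [hnum, Finset.mul_sum, mul_ite, mul_one, mul_zero]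
    rw [Finset.sum_comm]
    refine Finset.sum_congr rfl fun c _ => ?_
    rw [Finset.sum_ite_eq]
    have h := hammingDist_add_card_agree x c
    have h' : q + 1 - hammingDist x c = (agree x c).card := by omega
    rw [h']
    split_ifs with hr
    · rfl
    · rw [Finset.mem_range] at hr
      have : (agree x c).card - 1 = 0 := by omega
      rw [this, mul_zero]
  have hne : (((q + 1) * q : ℕ) : ℚ) ≠ 0 := by positivity
  simp_rw [div_mul_eq_mul_div]
  rw [← Finset.sum_div, div_eq_one_iff_eq hne, ← hnat]
  push_cast
  rfl
end

section
/- No linear [9, 2, 8]_8 code over the field with 8 elements is completely regular. -/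
/-!
Two words at distance `3` from the code `C` with different numbers of codewords at distance `5`
contradict complete regularity. Let `c ∈ C` have weight `8` and let `T` be three positions of its
support. The word `u` equal to `c` on `T` and `0` elsewhere has weight `3`, hence distance `3` from
`C` (every nonzero codeword has weight at least `8`), and `c` itself is at distance `5` from `u`.

Let `v` be `u` with one of its nonzero entries, at `s ∈ T`, replaced by another nonzero value.
It also has distance `3` from `C`. A codeword `e` at distance `5` from `v` agrees with `v` in four
positions; each of them is a zero of `e`, a zero of `e - c`, or `s`. As `e ≠ 0` and `e ≠ c`, the
minimum distance gives at most one position of each kind, which is impossible.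
-/

open Finset

/-- A word of weight `3` has distance `3` from a linear code of minimum distance at least `8`:
the nearest codeword is `0`. -/
lemma distTo_eq_three {F : Type*} [Field F] [DecidableEq F] (C : Submodule F (Fin 9 → F))
    (hmin : ∀ e ∈ C, e ≠ 0 → 8 ≤ hammingNorm e) (v : Fin 9 → F) (hv : hammingNorm v = 3) :
    distTo (C : Set (Fin 9 → F)) v = 3 := by
  refine IsLeast.csInf_eq ⟨⟨0, C.zero_mem, by simpa using hv⟩, ?_⟩
  rintro _ ⟨e, he, rfl⟩
  by_cases h0 : e = 0
  · simp [h0, hv]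
  · have h1 := hmin e he h0
    have h2 := hammingDist_triangle e v 0
    rw [hammingDist_zero_right, hammingDist_zero_right, hammingDist_comm] at h2
    omega

lemma card_zeros_le_one {F : Type*} [Field F] [DecidableEq F] (e : Fin 9 → F)
    (he : 8 ≤ hammingNorm e) : #{i | e i = 0} ≤ 1 := by
  have h := Finset.card_filter_add_card_filter_not (s := (univ : Finset (Fin 9)))
    (fun i => e i = 0)
  have h2 : hammingNorm e = #{i | ¬ e i = 0} := rfl
  simp only [card_univ, Fintype.card_fin] at h
  omega

/-- No linear `[9, 2, 8]_8` code is completely regular. -/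
theorem stmt_12 {F : Type*} [Field F] [Fintype F] [DecidableEq F]
    (hF : Fintype.card F = 8)
    (C : Submodule F (Fin 9 → F)) (hC : IsLinearCode C 2 8) :
    ¬ CompletelyRegular (C : Set (Fin 9 → F)) := by
  intro hCR
  obtain ⟨-, ⟨c, hc, -, hc8⟩, hlow⟩ := hC
  have hmin : ∀ e ∈ C, e ≠ 0 → 8 ≤ hammingNorm e := fun e he h0 => hlow ⟨e, he, h0, rfl⟩
  obtain ⟨a, ha0, ha1⟩ : ∃ a : F, a ≠ 0 ∧ a ≠ 1 := by
    by_contra! h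
    have hsub : (univ : Finset F) ⊆ {0, 1} := fun a _ => by
      by_cases h0 : a = 0 <;> simp [h0, h]
    have h1 := Finset.card_le_card hsub
    have h2 : #({0, 1} : Finset F) ≤ 2 := Finset.card_le_two
    rw [card_univ, hF] at h1
    omega
  have hsupp : #({i | c i ≠ 0} : Finset (Fin 9)) = 8 := hc8
  obtain ⟨T, hT, hT3⟩ := Finset.exists_subset_card_eq (s := ({i | c i ≠ 0} : Finset (Fin 9)))
    (n := 3) (by omega)
  have hTc : ∀ i ∈ T, c i ≠ 0 := fun i hi => by simpa using hT hi
  obtain ⟨s, hs⟩ : T.Nonempty := Finset.card_pos.1 (by omega)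
  set u : Fin 9 → F := fun i => if i ∈ T then c i else 0 with hu
  set v : Fin 9 → F := fun i => if i ∈ T then (if i = s then a * c i else c i) else 0 with hv
  have hu3 : hammingNorm u = 3 := by
    rw [← hT3, hammingNorm]
    congr 1
    ext i
    by_cases hi : i ∈ T <;> simp [hu, hi, hTc]
  have hv3 : hammingNorm v = 3 := by
    rw [← hT3, hammingNorm]
    congr 1
    ext i
    by_cases hi : i ∈ T <;> by_cases his : i = s <;> simp_all
  have huc : hammingDist u c = 5 := by
    have h : hammingDist u c = #(({i | c i ≠ 0} : Finset (Fin 9)) \ T) := by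
      rw [hammingDist]
      congr 1
      ext i
      by_cases hi : i ∈ T <;> simp [hu, hi, eq_comm]
    rw [h, Finset.card_sdiff_of_subset hT]
    omega
  have heq := hCR u v ((distTo_eq_three C hmin u hu3).trans (distTo_eq_three C hmin v hv3).symm) 5
  have hpos : 0 < numAt (C : Set (Fin 9 → F)) u 5 :=
    (Set.ncard_pos (Set.toFinite _)).2 ⟨c, hc, huc⟩
  rw [heq] at hpos
  obtain ⟨e, he, hve⟩ := (Set.ncard_pos (Set.toFinite _)).1 hpos
  have he0 : e ≠ 0 := by
    rintro rfl
    rw [hammingDist_zero_right] at hve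
    omega
  have hec : e - c ≠ 0 := by
    intro h
    obtain rfl := sub_eq_zero.1 h
    -- `v` and `u` differ only at `s`, where `v` no longer agrees with the codeword
    have hlt : hammingDist u e < hammingDist v e := by
      refine Finset.card_lt_card ⟨fun i => ?_, fun hsub => ?_⟩
      · by_cases hi : i ∈ T <;> simp [hu, hv, hi]
      · have := @hsub s (by simp [hv, hs, ha1, hTc s hs])
        simp [hu, hs] at this
    omega
  have hz1 := card_zeros_le_one e (hmin e he he0)
  have hz2 := card_zeros_le_one (e - c) (hmin _ (C.sub_mem he hc) hec)
  have hagree : #{i | v i = e i} = 4 := by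
    have h := Finset.card_filter_add_card_filter_not (s := (univ : Finset (Fin 9)))
      (fun i => v i = e i)
    have h2 : hammingDist v e = #{i | ¬ v i = e i} := rfl
    simp only [card_univ, Fintype.card_fin] at h
    omega
  have hsub : ({i | v i = e i} : Finset (Fin 9)) ⊆
      (univ.filter (fun i => e i = 0) ∪ univ.filter (fun i => (e - c) i = 0)) ∪ {s} := by
    intro i hi
    have hi' : v i = e i := by simpa using hi
    by_cases hiT : i ∈ T <;> by_cases his : i = s <;>
      simp [hv, hiT, his] at hi' <;> simp [his, ← hi']
  have h1 := Finset.card_le_card hsub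
  have h2 := Finset.card_union_le
    (univ.filter (fun i => e i = 0) ∪ univ.filter (fun i => (e - c) i = 0)) {s}
  have h3 := Finset.card_union_le (univ.filter (fun i => e i = 0))
    (univ.filter (fun i => (e - c) i = 0))
  rw [Finset.card_singleton] at h2
  omega
end

section
/- There is no linear [6, 2, 5]_4 code over the field with 4 elements, and there is no linear [6, 4, 3]_4 code over the field with 4 elements. -/
/-!
Both parts are pigeonhole arguments: the `6 * 3 = 18` pairs of a coordinate and a nonzero scalar
do not inject into a `2`-dimensional space over `F`, which has only `16` elements.

For a `[6,4]` code `C` the space is `F^6 ⧸ C` and the pair `(i, a)` is sent to the class of the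
vector with `a` in position `i`. A collision is a nonzero codeword of weight at most `2`
(`exists_mem_hammingNorm_le_two`).

For a `[6,2]` code `C` the space is the dual of `C` and the pair `(i, a)` is sent to the functional
`c ↦ a * c i`. A collision yields coordinates `i ≠ j` such that `c i = 0` whenever `c j = 0`
(`exists_coords_dependent`). As `dim C = 2`, some nonzero codeword vanishes at `j`, hence also
at `i`, and its weight is at most `4`.
-/

open Finset

/-- The pigeonhole step: 18 pairs do not inject into the 16 elements of a plane over `F`. -/
theorem exists_collision {F : Type*} [Field F] [Fintype F]
    (hF : Fintype.card F = 4) {V : Type*} [AddCommGroup V] [Module F V] [Module.Finite F V]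
    (hV : Module.finrank F V = 2) (f : Fin 6 × Fˣ → V) :
    ∃ p q, p ≠ q ∧ f p = f q := by
  classical
  have : Finite V := Module.finite_of_finite F
  have : Fintype V := Fintype.ofFinite V
  have hcard : Fintype.card V = 16 := by
    rw [Module.card_eq_pow_finrank (K := F), hV, hF]
    norm_num
  obtain ⟨p, q, hpq, h⟩ := Fintype.exists_ne_map_eq_of_card_lt f (by
    rw [hcard, Fintype.card_prod, Fintype.card_fin, Fintype.card_units, hF]
    norm_num)
  exact ⟨p, q, hpq, h⟩

theorem exists_mem_hammingNorm_le_two {F : Type*} [Field F] [Fintype F] [DecidableEq F]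
    (hF : Fintype.card F = 4) (C : Submodule F (Fin 6 → F)) (hC : Module.finrank F C = 4) :
    ∃ c ∈ C, c ≠ 0 ∧ hammingNorm c ≤ 2 := by
  have hQ : Module.finrank F ((Fin 6 → F) ⧸ C) = 2 := by
    have h := C.finrank_quotient_add_finrank
    rw [hC, Module.finrank_fin_fun] at h
    omega
  obtain ⟨⟨i, a⟩, ⟨j, b⟩, hne, h⟩ := exists_collision hF hQ
    (fun p => C.mkQ (Pi.single p.1 (p.2 : F)))
  refine ⟨Pi.single i (a : F) - Pi.single j (b : F), (Submodule.Quotient.eq C).1 (by simpa using h), ?_, ?_⟩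
  · intro h0
    have hi := congrFun (sub_eq_zero.1 h0) i
    rw [Pi.single_eq_same] at hi
    by_cases hij : i = j
    · subst hij
      rw [Pi.single_eq_same] at hi
      exact hne (by rw [Units.ext hi])
    · rw [Pi.single_eq_of_ne hij] at hi
      exact a.ne_zero hi
  · have hsub : (univ.filter fun l =>
        (Pi.single i (a : F) - Pi.single j (b : F) : Fin 6 → F) l ≠ 0) ⊆ {i, j} := by
      intro l hl
      by_contra hn
      simp only [mem_insert, mem_singleton, not_or] at hn
      simp [Pi.single_eq_of_ne hn.1, Pi.single_eq_of_ne hn.2] at hl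
    exact (card_le_card hsub).trans card_le_two

theorem exists_coords_dependent {F : Type*} [Field F] [Fintype F]
    (hF : Fintype.card F = 4) (C : Submodule F (Fin 6 → F)) (hC : Module.finrank F C = 2) :
    ∃ i j, i ≠ j ∧ ∀ c ∈ C, c j = 0 → c i = 0 := by
  have hD : Module.finrank F (Module.Dual F C) = 2 := by
    rw [Subspace.dual_finrank_eq, hC]
  obtain ⟨⟨i, a⟩, ⟨j, b⟩, hne, h⟩ := exists_collision hF hD
    (fun p => (p.2 : F) • (LinearMap.proj p.1 ∘ₗ C.subtype))
  have h' : ∀ c ∈ C, (a : F) * c i = b * c j := fun c hc => LinearMap.congr_fun h ⟨c, hc⟩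
  by_cases hij : i = j
  · -- Here `a ≠ b`, so coordinate `i` vanishes on all of `C` and any other `j` will do.
    subst hij
    obtain ⟨k, hk⟩ := exists_ne i
    refine ⟨i, k, hk.symm, fun c hc _ => ?_⟩
    by_contra hci
    exact hne (by rw [Units.ext (mul_right_cancel₀ hci (h' c hc))])
  · refine ⟨i, j, hij, fun c hc hcj => ?_⟩
    have := h' c hc
    rw [hcj, mul_zero] at this
    exact (mul_eq_zero.1 this).resolve_left a.ne_zero

theorem exists_ne_zero_coord_eq_zero {F : Type*} [Field F]
    (C : Submodule F (Fin 6 → F)) (hC : 1 < Module.finrank F C) (j : Fin 6) :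
    ∃ c ∈ C, c ≠ 0 ∧ c j = 0 := by
  have hker : LinearMap.ker ((LinearMap.proj j : (Fin 6 → F) →ₗ[F] F) ∘ₗ C.subtype) ≠ ⊥ :=
    LinearMap.ker_ne_bot_of_finrank_lt (by rwa [Module.finrank_self])
  obtain ⟨c, hc, hc0⟩ := Submodule.exists_mem_ne_zero_of_ne_bot hker
  exact ⟨c, c.2, fun h => hc0 (Subtype.ext h), hc⟩

/-- There is no linear `[6,2,5]_4` code and no linear `[6,4,3]_4` code. -/
theorem stmt_16 {F : Type*} [Field F] [Fintype F] [DecidableEq F]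
    (hF : Fintype.card F = 4) :
    (¬ ∃ C : Submodule F (Fin 6 → F), IsLinearCode C 2 5) ∧
    (¬ ∃ C : Submodule F (Fin 6 → F), IsLinearCode C 4 3) := by
  refine ⟨?_, ?_⟩
  · rintro ⟨C, hC, hmin⟩
    obtain ⟨i, j, hij, hzero⟩ := exists_coords_dependent hF C hC
    obtain ⟨c, hc, hc0, hcj⟩ := exists_ne_zero_coord_eq_zero C (by omega) j
    have hci := hzero c hc hcj
    have h5 : 5 ≤ hammingNorm c := hmin.2 ⟨c, hc, hc0, rfl⟩
    have h4 : hammingNorm c ≤ 4 := by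
      have hsub : (univ.filter fun l => c l ≠ 0) ⊆ univ \ {i, j} := by
        intro l hl
        have hl' : c l ≠ 0 := by simpa using hl
        simp only [mem_sdiff, mem_univ, true_and, mem_insert, mem_singleton, not_or]
        exact ⟨fun h => hl' (h ▸ hci), fun h => hl' (h ▸ hcj)⟩
      refine (card_le_card hsub).trans ?_
      rw [card_sdiff_of_subset (subset_univ _), card_pair hij]
      simp
    omega
  · rintro ⟨C, hC, hmin⟩
    obtain ⟨c, hc, hc0, h2⟩ := exists_mem_hammingNorm_le_two hF C hC
    have h3 : 3 ≤ hammingNorm c := hmin.2 ⟨c, hc, hc0, rfl⟩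
    omega
end
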